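/- arXiv:1710.11368 — 5 statements merged into one kernel-verified Lean document; each statement's English description precedes it below -/
import Mathlib

section
/- Andô's dilation theorem: Let T₁ and T₂ be commuting contractions on a complex Hilbert space H. Then there exist a complex Hilbert space K, a linear isometry Π : H → K, and a pair of commuting isometries V₁, V₂ on K such that Π ∘ T₁* = V₁* ∘ Π and Π ∘ T₂* = V₂* ∘ Π (so in particular Π ∘ (T₁T₂)* = (V₁V₂)* ∘ Π). -/
open ContinuousLinearMap

universe u

/-!
Choose maps `D₁`, `D₂` with orthogonal ranges in a Hilbert space `B` and `Dᵢ† Dᵢ = 1 - Tᵢ† Tᵢ`.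
Since `T₁` and `T₂` commute, the maps `D₁ T₂ + D₂` and `D₁ + D₂ T₁` both have Gram operator
`1 - (T₁ T₂)† T₁ T₂`, so after enlarging `B` some unitary `U` carries the first to the second.
The unilateral shift on `ℓ²(ℕ, B)` is the product, in either order, of the commuting isometries
`Z₁ = (P^⊥ + S P) U` and `Z₂ = U† (P + S P^⊥)`, where `P` projects onto the closed range of `D₁`.
With `c` the inclusion of the zeroth coordinate, the operators with rows `(Tᵢ, 0)` and `(Cᵢ, Zᵢ)`,
`C₁ = c D₁` and `C₂ = U† c D₂`, are isometries on `H ⊕ ℓ²(ℕ, B)`; the choice of `U` is exactly the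
condition that they commute.
-/

universe v

namespace Ando

open scoped InnerProductSpace lp

section Positive

open scoped ComplexOrder

variable {𝕜 : Type v} [RCLike 𝕜] {H : Type u} [NormedAddCommGroup H] [InnerProductSpace 𝕜 H]
  [CompleteSpace H]

lemma posSemidef_const_unit_of_isPositive {A : H →L[𝕜] H} (hA : A.IsPositive) :
    (Matrix.of fun _ _ : Unit => A).PosSemidef := by
  have hiff := (RKHS.posSemidef_tfae (K := Matrix.of fun _ _ : Unit => A)).out 0 2
  refine hiff.2 ⟨Matrix.ext fun _ _ => hA.isSelfAdjoint, fun f => ?_⟩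
  rw [Finsupp.unique_single f]
  simpa using hA.re_inner_nonneg_left (f default)

-- The reproducing kernel space of the kernel `A` on a point replaces the square root of `A`: this
-- avoids functional calculus, so `𝕜` may be real.
lemma exists_adjoint_comp_self_eq {A : H →L[𝕜] H} (hA : A.IsPositive) :
    ∃ (E : Type (max u v)) (_ : NormedAddCommGroup E) (_ : InnerProductSpace 𝕜 E)
      (_ : CompleteSpace E) (D : H →L[𝕜] E), adjoint D ∘L D = A := by
  have : Fact (Matrix.of fun _ _ : Unit => A).PosSemidef := ⟨posSemidef_const_unit_of_isPositive hA⟩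
  refine ⟨RKHS.OfKernel (Matrix.of fun _ _ : Unit => A), inferInstance, inferInstance,
    inferInstance, RKHS.kerFun _ (), ?_⟩
  rw [← RKHS.kernel_apply, RKHS.OfKernel.kernel_ofKernel, Matrix.of_apply]

lemma isPositive_one_sub_adjoint_comp_self {F : Type*} [NormedAddCommGroup F]
    [InnerProductSpace 𝕜 F] [CompleteSpace F] {T : H →L[𝕜] F} (hT : ‖T‖ ≤ 1) :
    (1 - adjoint T ∘L T).IsPositive := by
  refine isPositive_def'.2 ⟨?_, fun x => ?_⟩
  · exact (IsSelfAdjoint.one _).sub (isPositive_adjoint_comp_self T).isSelfAdjoint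
  · have hle : ‖T x‖ ^ 2 ≤ ‖x‖ ^ 2 := by
      gcongr
      exact (T.le_of_opNorm_le hT x).trans_eq (one_mul _)
    simpa [reApplyInnerSelf_apply, inner_sub_left, adjoint_inner_left,
      inner_self_eq_norm_sq] using hle

end Positive

section Defect

variable {𝕜 H E F G : Type*} [RCLike 𝕜] [NormedAddCommGroup H] [InnerProductSpace 𝕜 H]
  [NormedAddCommGroup E] [InnerProductSpace 𝕜 E] [NormedAddCommGroup F] [InnerProductSpace 𝕜 F]
  [NormedAddCommGroup G] [InnerProductSpace 𝕜 G]

/-- `D` is a defect map of `T`: `D† D = 1 - T† T`, stated by inner products so that any codomain is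
allowed and no adjoint is needed. -/
def IsDefect (D : H →L[𝕜] E) (T : H →L[𝕜] F) : Prop :=
  ∀ x y, ⟪D x, D y⟫_𝕜 = ⟪x, y⟫_𝕜 - ⟪T x, T y⟫_𝕜

lemma IsDefect.isometry_comp {D : H →L[𝕜] E} {T : H →L[𝕜] F} (hD : IsDefect D T)
    (J : E →ₗᵢ[𝕜] G) : IsDefect (J.toContinuousLinearMap ∘L D) T :=
  fun x y => (J.inner_map_map _ _).trans (hD x y)

end Defect

lemma exists_isDefect {𝕜 : Type v} [RCLike 𝕜] {H : Type u} {F : Type*} [NormedAddCommGroup H]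
    [InnerProductSpace 𝕜 H] [CompleteSpace H] [NormedAddCommGroup F] [InnerProductSpace 𝕜 F]
    [CompleteSpace F] {T : H →L[𝕜] F} (hT : ‖T‖ ≤ 1) :
    ∃ (E : Type (max u v)) (_ : NormedAddCommGroup E) (_ : InnerProductSpace 𝕜 E)
      (_ : CompleteSpace E) (D : H →L[𝕜] E), IsDefect D T := by
  obtain ⟨E, _, _, _, D, hD⟩ :=
    exists_adjoint_comp_self_eq (isPositive_one_sub_adjoint_comp_self hT)
  refine ⟨E, _, _, inferInstance, D, fun x y => ?_⟩
  rw [← adjoint_inner_left, ← comp_apply, hD]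
  simp [inner_sub_left, adjoint_inner_left]

section DirectSum

variable {𝕜 E F : Type*} [RCLike 𝕜] [NormedAddCommGroup E] [InnerProductSpace 𝕜 E]
  [NormedAddCommGroup F] [InnerProductSpace 𝕜 F]

variable (𝕜 E F) in
/-- The isometric inclusion of the first summand of a Hilbert sum. -/
noncomputable def inl : E →ₗᵢ[𝕜] WithLp 2 (E × F) where
  toLinearMap := (WithLp.linearEquiv 2 𝕜 (E × F)).symm.toLinearMap ∘ₗ LinearMap.inl 𝕜 E F
  norm_map' := WithLp.norm_toLp_fst 2 E F

variable (𝕜 E F) in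
/-- The isometric inclusion of the second summand of a Hilbert sum. -/
noncomputable def inr : F →ₗᵢ[𝕜] WithLp 2 (E × F) where
  toLinearMap := (WithLp.linearEquiv 2 𝕜 (E × F)).symm.toLinearMap ∘ₗ LinearMap.inr 𝕜 E F
  norm_map' := WithLp.norm_toLp_snd 2 E F

lemma inl_apply (x : E) : inl 𝕜 E F x = WithLp.toLp 2 (x, 0) := rfl

lemma inr_apply (y : F) : inr 𝕜 E F y = WithLp.toLp 2 (0, y) := rfl

lemma inner_inl_inr (x : E) (y : F) : ⟪inl 𝕜 E F x, inr 𝕜 E F y⟫_𝕜 = 0 := by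
  simp [inl_apply, inr_apply, WithLp.prod_inner_apply]

lemma inner_inl_add_inr (x x' : E) (y y' : F) :
    ⟪inl 𝕜 E F x + inr 𝕜 E F y, inl 𝕜 E F x' + inr 𝕜 E F y'⟫_𝕜 = ⟪x, x'⟫_𝕜 + ⟪y, y'⟫_𝕜 := by
  simp [inl_apply, inr_apply, WithLp.prod_inner_apply]

end DirectSum

section Exchange

variable {𝕜 X E : Type*} [RCLike 𝕜] [AddCommGroup X] [Module 𝕜 X]
  [NormedAddCommGroup E] [InnerProductSpace 𝕜 E] [CompleteSpace E]

-- The reflection in the closure of `{A x + C x}` fixes `A x + C x` and negates `A x - C x`.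
lemma exists_linearIsometryEquiv_of_inner_eq_zero {A C : X →ₗ[𝕜] E}
    (hinner : ∀ x y, ⟪A x, A y⟫_𝕜 = ⟪C x, C y⟫_𝕜) (horth : ∀ x y, ⟪A x, C y⟫_𝕜 = 0) :
    ∃ U : E ≃ₗᵢ[𝕜] E, ∀ x, U (A x) = C x := by
  let M := (LinearMap.range (A + C)).topologicalClosure
  have hadd (x : X) : A x + C x ∈ M :=
    Submodule.le_topologicalClosure _ (LinearMap.mem_range_self (A + C) x)
  have hsub (x : X) : A x - C x ∈ Mᗮ := by
    rw [Submodule.orthogonal_closure]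
    rintro _ ⟨y, rfl⟩
    have horth' : ⟪C y, A x⟫_𝕜 = 0 := inner_eq_zero_symm.1 (horth x y)
    simp only [LinearMap.add_apply, inner_add_left, inner_sub_right, hinner, horth, horth']
    ring
  refine ⟨M.reflection, fun x => ?_⟩
  have hfix := Submodule.reflection_mem_subspace_eq_self (hadd x)
  have hneg := Submodule.reflection_mem_subspace_orthogonalComplement_eq_neg (hsub x)
  rw [map_add] at hfix
  rw [map_sub] at hneg
  refine smul_right_injective E (two_ne_zero (α := 𝕜)) ?_
  calc (2 : 𝕜) • M.reflection (A x)
      = (M.reflection (A x) + M.reflection (C x)) + (M.reflection (A x) - M.reflection (C x)) := by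
        module
    _ = (2 : 𝕜) • C x := by rw [hfix, hneg]; module

-- Doubling the space makes the defects of the ranges of `A` and `C` equal: exchange `(A x, 0)` with
-- the orthogonal vector `(0, C x)`, then swap the summands.
lemma exists_linearIsometryEquiv_inl {A C : X →ₗ[𝕜] E}
    (hinner : ∀ x y, ⟪A x, A y⟫_𝕜 = ⟪C x, C y⟫_𝕜) :
    ∃ U : WithLp 2 (E × E) ≃ₗᵢ[𝕜] WithLp 2 (E × E),
      ∀ x, U (inl 𝕜 E E (A x)) = inl 𝕜 E E (C x) := by
  obtain ⟨r, hr⟩ := exists_linearIsometryEquiv_of_inner_eq_zero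
    (A := (inl 𝕜 E E).toLinearMap ∘ₗ A) (C := (inr 𝕜 E E).toLinearMap ∘ₗ C)
    (fun x y => by simpa using hinner x y) (fun x y => inner_inl_inr (A x) (C y))
  refine ⟨r.trans (LinearIsometryEquiv.withLpProdComm 2 𝕜 E E), fun x => ?_⟩
  have hrx : r (inl 𝕜 E E (A x)) = inr 𝕜 E E (C x) := hr x
  rw [LinearIsometryEquiv.trans_apply, hrx]
  rfl

lemma exists_starProjection_of_inner_eq_zero {A C : X →ₗ[𝕜] E}
    (horth : ∀ x y, ⟪A x, C y⟫_𝕜 = 0) :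
    ∃ P : E →L[𝕜] E, IsStarProjection P ∧ (∀ x, P (A x) = A x) ∧ ∀ x, P (C x) = 0 := by
  let M := (LinearMap.range A).topologicalClosure
  refine ⟨M.starProjection, isStarProjection_starProjection, fun x => ?_, fun x => ?_⟩
  · exact Submodule.starProjection_eq_self_iff.2
      (Submodule.le_topologicalClosure _ (LinearMap.mem_range_self A x))
  · rw [Submodule.starProjection_apply_eq_zero_iff, Submodule.orthogonal_closure]
    rintro _ ⟨y, rfl⟩
    exact horth y x

end Exchange

lemma exists_orthogonal_isDefect {𝕜 : Type v} [RCLike 𝕜] {H : Type u} [NormedAddCommGroup H]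
    [InnerProductSpace 𝕜 H] [CompleteSpace H] {T₁ T₂ : H →L[𝕜] H}
    (hT₁ : ‖T₁‖ ≤ 1) (hT₂ : ‖T₂‖ ≤ 1) (hcomm : Commute T₁ T₂) :
    ∃ (B : Type (max u v)) (_ : NormedAddCommGroup B) (_ : InnerProductSpace 𝕜 B)
      (_ : CompleteSpace B) (D₁ D₂ : H →L[𝕜] B) (U : B →L[𝕜] B),
      IsDefect D₁ T₁ ∧ IsDefect D₂ T₂ ∧ (∀ x y, ⟪D₁ x, D₂ y⟫_𝕜 = 0) ∧
      U ∈ unitary (B →L[𝕜] B) ∧ ∀ x, U (D₁ (T₂ x) + D₂ x) = D₁ x + D₂ (T₁ x) := by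
  obtain ⟨E₁, _, _, _, D₁, hD₁⟩ := exists_isDefect hT₁
  obtain ⟨E₂, _, _, _, D₂, hD₂⟩ := exists_isDefect hT₂
  let J₁ := inl 𝕜 E₁ E₂
  let J₂ := inr 𝕜 E₁ E₂
  let J := inl 𝕜 (WithLp 2 (E₁ × E₂)) (WithLp 2 (E₁ × E₂))
  have hT (x : H) : T₁ (T₂ x) = T₂ (T₁ x) := congr($hcomm x)
  obtain ⟨U, hU⟩ := exists_linearIsometryEquiv_inl
    (A := J₁.toLinearMap ∘ₗ (D₁ ∘L T₂).toLinearMap + J₂.toLinearMap ∘ₗ D₂.toLinearMap)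
    (C := J₁.toLinearMap ∘ₗ D₁.toLinearMap + J₂.toLinearMap ∘ₗ (D₂ ∘L T₁).toLinearMap)
    fun x y => by
      calc ⟪J₁ (D₁ (T₂ x)) + J₂ (D₂ x), J₁ (D₁ (T₂ y)) + J₂ (D₂ y)⟫_𝕜
          = ⟪x, y⟫_𝕜 - ⟪T₁ (T₂ x), T₁ (T₂ y)⟫_𝕜 := by
            rw [inner_inl_add_inr, hD₁, hD₂]
            ring
        _ = ⟪J₁ (D₁ x) + J₂ (D₂ (T₁ x)), J₁ (D₁ y) + J₂ (D₂ (T₁ y))⟫_𝕜 := by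
            rw [inner_inl_add_inr, hD₁, hD₂, hT, hT]
            ring
  refine ⟨_, _, _, inferInstance, (J.comp J₁).toContinuousLinearMap ∘L D₁,
    (J.comp J₂).toContinuousLinearMap ∘L D₂, U, hD₁.isometry_comp _, hD₂.isometry_comp _,
    fun x y => ?_, (Unitary.linearIsometryEquiv.symm U).2, fun x => ?_⟩
  · exact (J.inner_map_map _ _).trans (inner_inl_inr _ _)
  · simpa using hU x

section PartialShift

variable {R : Type*} [Ring R] {s p u : R}

/-- The operator acting as `s` on the range of the projection `p` and as the identity on its
complement. -/
def partialShift (s p : R) : R := 1 - p + s * p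

lemma partialShift_mul_partialShift_one_sub (hp : IsIdempotentElem p) (hsp : Commute s p) :
    partialShift s p * partialShift s (1 - p) = s := by
  have hsq : Commute s (1 - p) := (Commute.one_right s).sub_right hsp
  calc partialShift s p * partialShift s (1 - p)
      = (1 - p) * p + (1 - p) * s * (1 - p) + s * (p * p) + s * (p * s) * (1 - p) := by
        simp only [partialShift]
        noncomm_ring
    _ = (1 - p) * p + s * ((1 - p) * (1 - p)) + s * (p * p) + s * s * (p * (1 - p)) := by
        rw [← hsq.eq, ← hsp.eq]
        simp only [mul_assoc]
    _ = s := by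
        rw [hp.one_sub_mul_self, hp.mul_one_sub_self, hp.one_sub, hp]
        noncomm_ring

lemma partialShift_one_sub_mul_partialShift (hp : IsIdempotentElem p) (hsp : Commute s p) :
    partialShift s (1 - p) * partialShift s p = s := by
  simpa using partialShift_mul_partialShift_one_sub hp.one_sub
    ((Commute.one_right s).sub_right hsp)

variable [StarRing R]

lemma star_partialShift_mul_self (hs : star s * s = 1) (hp : IsStarProjection p)
    (hsp : Commute s p) : star (partialShift s p) * partialShift s p = 1 := by
  have hcross : (1 - p) * (s * p) = 0 := by
    rw [hsp.eq, ← mul_assoc, hp.one_sub_mul_self, zero_mul]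
  have hcross' : p * star s * (1 - p) = 0 := by
    simpa [hp.isSelfAdjoint.star_eq] using congr(star $hcross)
  calc star (partialShift s p) * partialShift s p
      = (1 - p) * (1 - p) + (1 - p) * (s * p) + p * star s * (1 - p)
          + p * (star s * s) * p := by
        simp only [partialShift, star_add, star_sub, star_one, star_mul, hp.isSelfAdjoint.star_eq]
        noncomm_ring
    _ = 1 := by
        rw [hcross, hcross', hs, hp.one_sub.isIdempotentElem, mul_one, hp.isIdempotentElem]
        abel

/-- The first of the two factors of `s` in the Berger–Coburn–Lebow model of commuting isometries,
for a projection `p` and a unitary `u` commuting with the isometry `s`. -/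
def bclFst (s p u : R) : R := partialShift s p * u

/-- The second factor of `s` in the Berger–Coburn–Lebow model, complementary to `bclFst s p u`. -/
def bclSnd (s p u : R) : R := star u * partialShift s (1 - p)

lemma star_bclFst_mul_self (hs : star s * s = 1) (hp : IsStarProjection p) (hsp : Commute s p)
    (hu : u ∈ unitary R) : star (bclFst s p u) * bclFst s p u = 1 := by
  calc star (bclFst s p u) * bclFst s p u
      = star u * (star (partialShift s p) * partialShift s p) * u := by
        simp only [bclFst, star_mul, mul_assoc]
    _ = 1 := by
        rw [star_partialShift_mul_self hs hp hsp, mul_one, Unitary.star_mul_self_of_mem hu]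

lemma star_bclSnd_mul_self (hs : star s * s = 1) (hp : IsStarProjection p) (hsp : Commute s p)
    (hu : u ∈ unitary R) : star (bclSnd s p u) * bclSnd s p u = 1 := by
  calc star (bclSnd s p u) * bclSnd s p u
      = star (partialShift s (1 - p)) * (u * star u) * partialShift s (1 - p) := by
        simp only [bclSnd, star_mul, star_star, mul_assoc]
    _ = 1 := by
        rw [Unitary.mul_star_self_of_mem hu, mul_one,
          star_partialShift_mul_self hs hp.one_sub ((Commute.one_right s).sub_right hsp)]

lemma commute_bclFst_bclSnd (hp : IsIdempotentElem p) (hsp : Commute s p) (hsu : Commute s u)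
    (hu : u ∈ unitary R) : Commute (bclFst s p u) (bclSnd s p u) := by
  calc bclFst s p u * bclSnd s p u
      = partialShift s p * (u * star u) * partialShift s (1 - p) := by
        simp only [bclFst, bclSnd, mul_assoc]
    _ = s := by
        rw [Unitary.mul_star_self_of_mem hu, mul_one,
          partialShift_mul_partialShift_one_sub hp hsp]
    _ = star u * s * u := by
        rw [mul_assoc, hsu.eq, ← mul_assoc, Unitary.star_mul_self_of_mem hu, one_mul]
    _ = star u * (partialShift s (1 - p) * partialShift s p) * u := by
        rw [partialShift_one_sub_mul_partialShift hp hsp]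
    _ = bclSnd s p u * bclFst s p u := by
        simp only [bclFst, bclSnd, mul_assoc]

end PartialShift

section Ampliation

variable {ι 𝕜 B : Type*} [RCLike 𝕜] [NormedAddCommGroup B] [InnerProductSpace 𝕜 B]

variable (𝕜 B) in
/-- The isometric inclusion of `B` as the `i`-th summand of `ℓ²(ι, B)`. -/
noncomputable def coordInclusion [DecidableEq ι] (i : ι) : B →ₗᵢ[𝕜] ℓ²(ι, B) where
  toLinearMap := lp.lsingle (E := fun _ => B) 2 i
  norm_map' := lp.norm_single (E := fun _ => B) two_pos i

lemma coordInclusion_apply [DecidableEq ι] (i j : ι) (b : B) :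
    coordInclusion 𝕜 B i b j = if j = i then b else 0 :=
  Pi.single_apply i b j

variable [CompleteSpace B]

variable (ι 𝕜 B) in
/-- The ampliation `A ↦ 1 ⊗ A`, letting an operator on `B` act on each coordinate of
`ℓ²(ι, B)`. -/
noncomputable def ampliation :
    (B →L[𝕜] B) →⋆ₐ[𝕜] (ℓ²(ι, B) →L[𝕜] ℓ²(ι, B)) where
  toFun A := lp.mapCLM 2 (fun _ => A) (norm_nonneg A) fun _ => le_rfl
  map_one' := rfl
  map_mul' _ _ := rfl
  map_zero' := rfl
  map_add' _ _ := rfl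
  commutes' _ := rfl
  map_star' A := by
    refine (eq_adjoint_iff _ _).2 fun f g => ?_
    simp only [lp.inner_eq_tsum]
    exact tsum_congr fun i => adjoint_inner_left A (g i) (f i)

lemma ampliation_apply (A : B →L[𝕜] B) (f : ℓ²(ι, B)) (i : ι) : ampliation ι 𝕜 B A f i = A (f i) :=
  rfl

lemma ampliation_coordInclusion [DecidableEq ι] (A : B →L[𝕜] B) (i : ι) (b : B) :
    ampliation ι 𝕜 B A (coordInclusion 𝕜 B i b) = coordInclusion 𝕜 B i (A b) := by
  ext j
  simp [ampliation_apply, coordInclusion_apply, apply_ite A]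

end Ampliation

section UnilateralShift

/-- The sequence `0, f 0, f 1, …`. -/
def zeroCons {B : Type*} [Zero B] (f : ℕ → B) : ℕ → B
  | 0 => 0
  | n + 1 => f n

lemma memℓp_zeroCons {B : Type*} [NormedAddCommGroup B] {p : ENNReal} (hp : 0 < p.toReal)
    {f : ℕ → B} (hf : Memℓp f p) : Memℓp (zeroCons f) p :=
  memℓp_gen <| (summable_nat_add_iff (f := fun n => ‖zeroCons f n‖ ^ p.toReal) 1).1 (hf.summable hp)

variable {𝕜 B : Type*} [RCLike 𝕜] [NormedAddCommGroup B] [InnerProductSpace 𝕜 B]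

variable (𝕜 B) in
/-- The forward shift on `ℓ²(ℕ, B)` as a linear map, before its boundedness is known. -/
noncomputable def shiftₗ : ℓ²(ℕ, B) →ₗ[𝕜] ℓ²(ℕ, B) where
  toFun f := ⟨zeroCons f, memℓp_zeroCons (by norm_num) (lp.memℓp f)⟩
  map_add' f g := by
    ext (_ | n)
    · exact (add_zero (0 : B)).symm
    · rfl
  map_smul' a f := by
    ext (_ | n)
    · exact (smul_zero a).symm
    · rfl

lemma shiftₗ_apply_zero (f : ℓ²(ℕ, B)) : shiftₗ 𝕜 B f 0 = 0 := rfl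

lemma shiftₗ_apply_succ (f : ℓ²(ℕ, B)) (n : ℕ) : shiftₗ 𝕜 B f (n + 1) = f n := rfl

lemma inner_shiftₗ_shiftₗ (f g : ℓ²(ℕ, B)) : ⟪shiftₗ 𝕜 B f, shiftₗ 𝕜 B g⟫_𝕜 = ⟪f, g⟫_𝕜 := by
  have hsum : Summable fun n => ⟪shiftₗ 𝕜 B f n, shiftₗ 𝕜 B g n⟫_𝕜 :=
    lp.summable_inner (𝕜 := 𝕜) _ _
  rw [lp.inner_eq_tsum, lp.inner_eq_tsum, hsum.tsum_eq_zero_add]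
  simp only [shiftₗ_apply_zero, shiftₗ_apply_succ, inner_zero_left, zero_add]

variable (𝕜 B) in
/-- The unilateral shift of multiplicity space `B`, as a bounded operator. -/
noncomputable def unilateralShift : ℓ²(ℕ, B) →L[𝕜] ℓ²(ℕ, B) :=
  ((shiftₗ 𝕜 B).isometryOfInner inner_shiftₗ_shiftₗ).toContinuousLinearMap

variable [CompleteSpace B]

lemma star_unilateralShift_mul_self : star (unilateralShift 𝕜 B) * unilateralShift 𝕜 B = 1 :=
  LinearIsometry.adjoint_comp_self _

lemma commute_unilateralShift_ampliation (A : B →L[𝕜] B) :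
    Commute (unilateralShift 𝕜 B) (ampliation ℕ 𝕜 B A) := by
  ext f (_ | n)
  · exact (map_zero A).symm
  · rfl

lemma star_unilateralShift_coordInclusion_zero (b : B) :
    star (unilateralShift 𝕜 B) (coordInclusion 𝕜 B 0 b) = 0 := by
  refine ext_inner_right 𝕜 fun f => ?_
  rw [star_eq_adjoint, adjoint_inner_left, inner_zero_left]
  refine (lp.inner_single_left (𝕜 := 𝕜) 0 b (unilateralShift 𝕜 B f)).trans ?_
  exact inner_zero_right b

end UnilateralShift

section PartialShiftOperator

variable {𝕜 L : Type*} [RCLike 𝕜] [NormedAddCommGroup L] [InnerProductSpace 𝕜 L]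
  {s p u : L →L[𝕜] L} {x : L}

lemma partialShift_apply_of_apply_eq_zero (hpx : p x = 0) : partialShift s p x = x := by
  simp [partialShift, hpx]

variable [CompleteSpace L]

lemma star_partialShift_apply_eq_zero (hp : IsSelfAdjoint p) (hpx : p x = x)
    (hsx : star s x = 0) : star (partialShift s p) x = 0 := by
  simp [partialShift, hp.star_eq, hpx, hsx]

lemma apply_star_apply_of_mem_unitary (hu : u ∈ unitary (L →L[𝕜] L)) (x : L) :
    u (star u x) = x :=
  congr($(Unitary.mul_star_self_of_mem hu) x)

lemma star_apply_apply_of_mem_unitary (hu : u ∈ unitary (L →L[𝕜] L)) (x : L) :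
    star u (u x) = x :=
  congr($(Unitary.star_mul_self_of_mem hu) x)

lemma star_bclFst_apply_eq_zero (hp : IsSelfAdjoint p) (hpx : p x = x) (hsx : star s x = 0) :
    star (bclFst s p u) x = 0 := by
  rw [bclFst, star_mul, mul_def, comp_apply, star_partialShift_apply_eq_zero hp hpx hsx, map_zero]

lemma star_bclSnd_apply_star_eq_zero (hp : IsSelfAdjoint p) (hu : u ∈ unitary (L →L[𝕜] L))
    (hpx : p x = 0) (hsx : star s x = 0) : star (bclSnd s p u) (star u x) = 0 := by
  rw [bclSnd, star_mul, star_star, mul_def, comp_apply, apply_star_apply_of_mem_unitary hu]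
  exact star_partialShift_apply_eq_zero ((IsSelfAdjoint.one _).sub hp) (by simp [hpx]) hsx

lemma bclFst_apply_star (hu : u ∈ unitary (L →L[𝕜] L)) (hpx : p x = 0) :
    bclFst s p u (star u x) = x := by
  rw [bclFst, mul_def, comp_apply, apply_star_apply_of_mem_unitary hu]
  exact partialShift_apply_of_apply_eq_zero hpx

lemma bclSnd_apply (hpx : p x = x) : bclSnd s p u x = star u x := by
  rw [bclSnd, mul_def, comp_apply, partialShift_apply_of_apply_eq_zero (by simp [hpx])]

end PartialShiftOperator

lemma exists_commute_isDefect {𝕜 : Type v} [RCLike 𝕜] {H : Type u} [NormedAddCommGroup H]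
    [InnerProductSpace 𝕜 H] [CompleteSpace H] {T₁ T₂ : H →L[𝕜] H}
    (hT₁ : ‖T₁‖ ≤ 1) (hT₂ : ‖T₂‖ ≤ 1) (hcomm : Commute T₁ T₂) :
    ∃ (L : Type (max u v)) (_ : NormedAddCommGroup L) (_ : InnerProductSpace 𝕜 L)
      (_ : CompleteSpace L) (C₁ C₂ : H →L[𝕜] L) (Z₁ Z₂ : L →L[𝕜] L),
      IsDefect C₁ T₁ ∧ IsDefect C₂ T₂ ∧ star Z₁ * Z₁ = 1 ∧ star Z₂ * Z₂ = 1 ∧ Commute Z₁ Z₂ ∧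
      (∀ x, star Z₁ (C₁ x) = 0) ∧ (∀ x, star Z₂ (C₂ x) = 0) ∧
      ∀ x, C₁ (T₂ x) + Z₁ (C₂ x) = C₂ (T₁ x) + Z₂ (C₁ x) := by
  obtain ⟨B, _, _, _, D₁, D₂, U, hD₁, hD₂, horth, hU, hUD⟩ :=
    exists_orthogonal_isDefect hT₁ hT₂ hcomm
  obtain ⟨P, hP, hPD₁, hPD₂⟩ := exists_starProjection_of_inner_eq_zero
    (A := D₁.toLinearMap) (C := D₂.toLinearMap) horth
  let c := coordInclusion 𝕜 B (0 : ℕ)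
  let s := unilateralShift 𝕜 B
  let p := ampliation ℕ 𝕜 B P
  let u := ampliation ℕ 𝕜 B U
  have hs : star s * s = 1 := star_unilateralShift_mul_self
  have hsc (b : B) : star s (c b) = 0 := star_unilateralShift_coordInclusion_zero b
  have hp : IsStarProjection p := hP.map _
  have hsp : Commute s p := commute_unilateralShift_ampliation P
  have hu : u ∈ unitary _ := Unitary.map_mem _ hU
  have hpD₁ (x : H) : p (c (D₁ x)) = c (D₁ x) :=
    (ampliation_coordInclusion P 0 _).trans congr(c $(hPD₁ x))
  have hpD₂ (x : H) : p (c (D₂ x)) = 0 :=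
    (ampliation_coordInclusion P 0 _).trans (congr(c $(hPD₂ x)).trans (map_zero c))
  have hucD (x : H) : u (c (D₁ (T₂ x) + D₂ x)) = c (D₁ x + D₂ (T₁ x)) :=
    (ampliation_coordInclusion U 0 _).trans congr(c $(hUD x))
  let J := (Unitary.linearIsometryEquiv (star ⟨u, hu⟩)).toLinearIsometry
  refine ⟨_, _, _, inferInstance, c.toContinuousLinearMap ∘L D₁,
    (J.comp c).toContinuousLinearMap ∘L D₂, bclFst s p u, bclSnd s p u, hD₁.isometry_comp c,
    hD₂.isometry_comp _, star_bclFst_mul_self hs hp hsp hu, star_bclSnd_mul_self hs hp hsp hu,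
    commute_bclFst_bclSnd hp.isIdempotentElem hsp (commute_unilateralShift_ampliation U) hu,
    fun x => star_bclFst_apply_eq_zero hp.isSelfAdjoint (hpD₁ x) (hsc _),
    fun x => star_bclSnd_apply_star_eq_zero hp.isSelfAdjoint hu (hpD₂ x) (hsc _), fun x => ?_⟩
  calc c (D₁ (T₂ x)) + bclFst s p u (star u (c (D₂ x)))
      = star u (u (c (D₁ (T₂ x) + D₂ x))) := by
        rw [bclFst_apply_star hu (hpD₂ x), ← map_add, star_apply_apply_of_mem_unitary hu]
    _ = star u (c (D₂ (T₁ x))) + bclSnd s p u (c (D₁ x)) := by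
        rw [hucD, bclSnd_apply (hpD₁ x), ← map_add, ← map_add, add_comm]

section LowerTriangular

variable {𝕜 H L : Type*} [RCLike 𝕜] [NormedAddCommGroup H] [InnerProductSpace 𝕜 H]
  [NormedAddCommGroup L] [InnerProductSpace 𝕜 L]

/-- The operator `(h, l) ↦ (T h, C h + Z l)` on the Hilbert sum of `H` and `L`. If `Z` is an
isometry whose range is orthogonal to that of a defect map `C` of `T`, it is an isometric lift
of `T`. -/
noncomputable def lowerTriangular (T : H →L[𝕜] H) (C : H →L[𝕜] L) (Z : L →L[𝕜] L) :
    WithLp 2 (H × L) →L[𝕜] WithLp 2 (H × L) :=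
  (inl 𝕜 H L).toContinuousLinearMap ∘L T ∘L WithLp.fstL 2 𝕜 H L +
    (inr 𝕜 H L).toContinuousLinearMap ∘L
      (C ∘L WithLp.fstL 2 𝕜 H L + Z ∘L WithLp.sndL 2 𝕜 H L)

variable {T T₁ T₂ : H →L[𝕜] H} {C C₁ C₂ : H →L[𝕜] L} {Z Z₁ Z₂ : L →L[𝕜] L}

lemma lowerTriangular_apply (w : WithLp 2 (H × L)) :
    lowerTriangular T C Z w = inl 𝕜 H L (T w.fst) + inr 𝕜 H L (C w.fst + Z w.snd) := rfl

lemma commute_lowerTriangular (hT : Commute T₁ T₂) (hZ : Commute Z₁ Z₂)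
    (hC : ∀ x, C₁ (T₂ x) + Z₁ (C₂ x) = C₂ (T₁ x) + Z₂ (C₁ x)) :
    Commute (lowerTriangular T₁ C₁ Z₁) (lowerTriangular T₂ C₂ Z₂) := by
  have hTx (x : H) : T₁ (T₂ x) = T₂ (T₁ x) := congr($hT x)
  have hZx (y : L) : Z₁ (Z₂ y) = Z₂ (Z₁ y) := congr($hZ y)
  refine ContinuousLinearMap.ext fun w => ?_
  have hsnd : C₁ (T₂ w.fst) + Z₁ (C₂ w.fst + Z₂ w.snd) =
      C₂ (T₁ w.fst) + Z₂ (C₁ w.fst + Z₁ w.snd) := by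
    rw [map_add, map_add, ← add_assoc, ← add_assoc, hC, hZx]
  simpa [lowerTriangular_apply, inl_apply, inr_apply, hTx] using hsnd

variable [CompleteSpace H] [CompleteSpace L]

lemma adjoint_lowerTriangular_mul_self (hC : IsDefect C T) (hZ : star Z * Z = 1)
    (hZC : ∀ x, star Z (C x) = 0) :
    adjoint (lowerTriangular T C Z) * lowerTriangular T C Z = 1 := by
  refine (inner_map_map_iff_adjoint_comp_self _).1 fun w w' => ?_
  have hZZ : ⟪Z w.snd, Z w'.snd⟫_𝕜 = ⟪w.snd, w'.snd⟫_𝕜 :=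
    (inner_map_map_iff_adjoint_comp_self Z).2 hZ _ _
  have hZC' (x : H) (y : L) : ⟪Z y, C x⟫_𝕜 = 0 := by
    rw [← adjoint_inner_right, ← star_eq_adjoint, hZC, inner_zero_right]
  have hCZ (x : H) (y : L) : ⟪C x, Z y⟫_𝕜 = 0 := inner_eq_zero_symm.1 (hZC' x y)
  rw [lowerTriangular_apply, lowerTriangular_apply, inner_inl_add_inr, inner_add_left,
    inner_add_right, inner_add_right, hC, hZZ, hZC', hCZ, WithLp.prod_inner_apply]
  simp only [WithLp.ofLp_fst, WithLp.ofLp_snd]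
  ring

lemma adjoint_lowerTriangular_inl (x : H) :
    adjoint (lowerTriangular T C Z) (inl 𝕜 H L x) = inl 𝕜 H L (adjoint T x) := by
  refine ext_inner_right 𝕜 fun w => ?_
  rw [adjoint_inner_left]
  simp [lowerTriangular_apply, inl_apply, inr_apply, WithLp.prod_inner_apply, adjoint_inner_left]

end LowerTriangular

end Ando

theorem ando_dilation_general {𝕜 : Type v} [RCLike 𝕜] {H : Type u} [NormedAddCommGroup H]
    [InnerProductSpace 𝕜 H] [CompleteSpace H] (T₁ T₂ : H →L[𝕜] H)
    (hT₁ : ‖T₁‖ ≤ 1) (hT₂ : ‖T₂‖ ≤ 1) (hcomm : T₁ * T₂ = T₂ * T₁) :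
    ∃ (K : Type (max u v)) (_ : NormedAddCommGroup K) (_ : InnerProductSpace 𝕜 K)
      (_ : CompleteSpace K) (Pi : H →ₗᵢ[𝕜] K) (V₁ V₂ : K →L[𝕜] K),
        adjoint V₁ * V₁ = 1 ∧ adjoint V₂ * V₂ = 1 ∧ V₁ * V₂ = V₂ * V₁ ∧
        (∀ h : H, Pi (adjoint T₁ h) = adjoint V₁ (Pi h)) ∧
        (∀ h : H, Pi (adjoint T₂ h) = adjoint V₂ (Pi h)) := by
  obtain ⟨L, _, _, _, C₁, C₂, Z₁, Z₂, hC₁, hC₂, hZ₁, hZ₂, hZ, hZC₁, hZC₂, hC⟩ :=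
    Ando.exists_commute_isDefect hT₁ hT₂ hcomm
  exact ⟨WithLp 2 (H × L), _, _, inferInstance, Ando.inl 𝕜 H L,
    Ando.lowerTriangular T₁ C₁ Z₁, Ando.lowerTriangular T₂ C₂ Z₂,
    Ando.adjoint_lowerTriangular_mul_self hC₁ hZ₁ hZC₁,
    Ando.adjoint_lowerTriangular_mul_self hC₂ hZ₂ hZC₂,
    Ando.commute_lowerTriangular hcomm hZ hC,
    fun h => (Ando.adjoint_lowerTriangular_inl h).symm,
    fun h => (Ando.adjoint_lowerTriangular_inl h).symm⟩

/-- **Andô's dilation theorem.** For commuting contractions `T₁, T₂` on a complex Hilbert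
space `H` there exist a complex Hilbert space `K`, a linear isometry `Π : H → K` and a pair
of commuting isometries `V₁, V₂` on `K` with `Π ∘ T₁* = V₁* ∘ Π` and `Π ∘ T₂* = V₂* ∘ Π`. -/
theorem ando_dilation {H : Type u} [NormedAddCommGroup H] [InnerProductSpace ℂ H]
    [CompleteSpace H] (T₁ T₂ : H →L[ℂ] H)
    (hT₁ : ‖T₁‖ ≤ 1) (hT₂ : ‖T₂‖ ≤ 1) (hcomm : T₁ * T₂ = T₂ * T₁) :
    ∃ (K : Type u) (_ : NormedAddCommGroup K) (_ : InnerProductSpace ℂ K) (_ : CompleteSpace K)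
      (Pi : H →ₗᵢ[ℂ] K) (V₁ V₂ : K →L[ℂ] K),
        adjoint V₁ * V₁ = 1 ∧ adjoint V₂ * V₂ = 1 ∧ V₁ * V₂ = V₂ * V₁ ∧
        (∀ h : H, Pi (adjoint T₁ h) = adjoint V₁ (Pi h)) ∧
        (∀ h : H, Pi (adjoint T₂ h) = adjoint V₂ (Pi h)) := by
  exact ando_dilation_general T₁ T₂ hT₁ hT₂ hcomm
end

section
/- Fundamental operators: Let T₁, T₂ be commuting contractions on a complex Hilbert space H, T = T₁T₂, and let p be the orthogonal projection of H onto 𝒟_T. Then there exist bounded operators F₁, F₂ on H with ‖F₁‖ ≤ 1, ‖F₂‖ ≤ 1, F₁ = pF₁p, F₂ = pF₂p, satisfying T₁ − T₂*T = D_T F₁ D_T and T₂ − T₁*T = D_T F₂ D_T. Moreover such F₁ and F₂ are unique: if F, F′ are bounded operators on H with F = pFp, F′ = pF′p and D_T F D_T = D_T F′ D_T, then F = F′. -/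
open ContinuousLinearMap

/-!
Write `T = T₁T₂` and let `D*D = 1 - T*T`. Commutativity gives `T₁ - T₂*T = (1 - T₂*T₂)T₁`, so the
Cauchy–Schwarz inequality for the positive operator `1 - T₂*T₂` bounds `|⟪(T₁ - T₂*T)x, y⟫|²` by
`(‖T₁x‖² - ‖Tx‖²)(‖y‖² - ‖T₂y‖²)`. As `‖T₁x‖ ≤ ‖x‖` and `‖Ty‖ ≤ ‖T₂y‖`, this is at most
`‖Dx‖²‖Dy‖²`. The sesquilinear form `(Dx, Dy) ↦ ⟪(T₁ - T₂*T)x, y⟫` is therefore well defined and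
contractive on the range of `D`, and `F₁` is the operator representing its extension to the closure
of that range. No square root is extracted, so the argument also covers real Hilbert spaces.
-/

section CauchySchwarz

variable {𝕜 E : Type*} [RCLike 𝕜] [NormedAddCommGroup E] [InnerProductSpace 𝕜 E]

theorem norm_inner_apply_sq_le_of_isPositive {A : E →ₗ[𝕜] E} (hA : A.IsPositive) (x y : E) :
    ‖inner 𝕜 (A x) y‖ ^ 2 ≤ RCLike.re (inner 𝕜 (A x) x) * RCLike.re (inner 𝕜 (A y) y) := by
  let core : PreInnerProductSpace.Core 𝕜 E :=
    { inner u v := inner 𝕜 (A u) v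
      conj_inner_symm u v := by rw [inner_conj_symm, hA.isSymmetric u v]
      re_inner_nonneg := hA.re_inner_nonneg_left
      add_left u v w := by rw [map_add, inner_add_left]
      smul_left u v c := by rw [map_smul, inner_smul_left] }
  have norm_symm : ‖inner 𝕜 (A y) x‖ = ‖inner 𝕜 (A x) y‖ := by
    rw [norm_inner_symm, hA.isSymmetric x y]
  calc ‖inner 𝕜 (A x) y‖ ^ 2 = ‖inner 𝕜 (A x) y‖ * ‖inner 𝕜 (A y) x‖ := by rw [norm_symm, sq]
    _ ≤ _ := @InnerProductSpace.Core.inner_mul_inner_self_le 𝕜 E _ _ _ core x y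

end CauchySchwarz

section ClosedRangeProjection

variable {𝕜 E K : Type*} [RCLike 𝕜] [NormedAddCommGroup E] [NormedSpace 𝕜 E]
  [NormedAddCommGroup K] [InnerProductSpace 𝕜 K] [CompleteSpace K]

/-- The orthogonal projection onto the closure of the range of `D`. When `D` is the defect operator
of a contraction `T`, this is the projection onto the defect space `𝒟_T`. -/
noncomputable def closedRangeProjection (D : E →L[𝕜] K) : K →L[𝕜] K :=
  D.range.topologicalClosure.starProjection

theorem isStarProjection_closedRangeProjection (D : E →L[𝕜] K) :
    IsStarProjection (closedRangeProjection D) :=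
  isStarProjection_starProjection

theorem adjoint_closedRangeProjection (D : E →L[𝕜] K) :
    adjoint (closedRangeProjection D) = closedRangeProjection D :=
  (isStarProjection_closedRangeProjection D).isSelfAdjoint.adjoint_eq

theorem range_closedRangeProjection (D : E →L[𝕜] K) :
    (closedRangeProjection D).range = D.range.topologicalClosure :=
  Submodule.range_starProjection _

theorem eq_closedRangeProjection {D : E →L[𝕜] K} {p : K →L[𝕜] K} (hp : IsStarProjection p)
    (hrange : Set.range p = closure (Set.range D)) : p = closedRangeProjection D := by
  refine hp.ext (isStarProjection_closedRangeProjection D) (SetLike.coe_injective ?_)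
  rw [range_closedRangeProjection]
  exact hrange

theorem opNorm_comp_closedRangeProjection_le {G : Type*} [NormedAddCommGroup G] [NormedSpace 𝕜 G]
    {D : E →L[𝕜] K} {B : K →L[𝕜] G} {c : ℝ} (hc : 0 ≤ c) (h : ∀ x, ‖B (D x)‖ ≤ c * ‖D x‖) :
    ‖B ∘L closedRangeProjection D‖ ≤ c := by
  have bound_closure : ∀ u ∈ D.range.topologicalClosure, ‖B u‖ ≤ c * ‖u‖ :=
    closure_minimal (by rintro _ ⟨x, rfl⟩; exact h x)
      (isClosed_le (by fun_prop : Continuous fun u ↦ ‖B u‖) (by fun_prop))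
  refine opNorm_le_bound _ hc fun u ↦ ?_
  calc ‖B (closedRangeProjection D u)‖ ≤ c * ‖closedRangeProjection D u‖ :=
        bound_closure _ (Submodule.starProjection_apply_mem _ u)
    _ ≤ c * ‖u‖ := by gcongr; exact Submodule.norm_starProjection_apply_le _ u

theorem comp_closedRangeProjection_eq_of_comp_eq {G : Type*} [NormedAddCommGroup G]
    [NormedSpace 𝕜 G] {D : E →L[𝕜] K} {X Y : K →L[𝕜] G} (h : X ∘L D = Y ∘L D) :
    X ∘L closedRangeProjection D = Y ∘L closedRangeProjection D := by
  rw [← sub_eq_zero, ← sub_comp, ← norm_le_zero_iff]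
  refine opNorm_comp_closedRangeProjection_le le_rfl fun x ↦ ?_
  have h_apply : X (D x) = Y (D x) := congr($h x)
  simp [h_apply]

/-- Douglas' factorization lemma. -/
theorem exists_comp_eq_of_norm_le {G : Type*} [NormedAddCommGroup G] [NormedSpace 𝕜 G]
    [CompleteSpace G] (B : E →L[𝕜] G) (D : E →L[𝕜] K) {c : ℝ} (hc : 0 ≤ c)
    (h : ∀ x, ‖B x‖ ≤ c * ‖D x‖) :
    ∃ X : K →L[𝕜] G, ‖X‖ ≤ c ∧ X ∘L D = B ∧ X ∘L closedRangeProjection D = X := by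
  let M := D.range.topologicalClosure
  let e : E →ₗ[𝕜] M := D.toLinearMap.codRestrict M
    fun x ↦ D.range.le_topologicalClosure (LinearMap.mem_range_self _ x)
  have dense_e : DenseRange e := by
    intro y
    rw [closure_subtype, ← Set.range_comp]
    exact y.2
  let Y : M →L[𝕜] G := B.toLinearMap.extendOfNorm e
  have norm_Y : ‖Y‖ ≤ c := LinearMap.opNorm_extendOfNorm_le dense_e hc h
  refine ⟨Y ∘L M.orthogonalProjectionOnto, ?_, ?_, ?_⟩
  · calc ‖Y ∘L M.orthogonalProjectionOnto‖ ≤ ‖Y‖ * ‖M.orthogonalProjectionOnto‖ :=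
        opNorm_comp_le _ _
      _ ≤ c * 1 := by gcongr; exact M.orthogonalProjectionOnto_norm_le
      _ = c := mul_one c
  · ext x
    have proj_D : M.orthogonalProjectionOnto (D x) = e x :=
      M.orthogonalProjectionOnto_mem_subspace_eq_self (e x)
    rw [comp_apply, comp_apply, proj_D]
    exact LinearMap.extendOfNorm_eq dense_e ⟨c, h⟩ x
  · ext x
    exact congrArg Y (M.orthogonalProjectionOnto_mem_subspace_eq_self _)

end ClosedRangeProjection

section SesquilinearFactorization

variable {𝕜 E F K L : Type*} [RCLike 𝕜] [NormedAddCommGroup E] [NormedSpace 𝕜 E]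
  [NormedAddCommGroup F] [InnerProductSpace 𝕜 F]

theorem norm_apply_le_of_norm_inner_le [NormedAddCommGroup K] [NormedSpace 𝕜 K]
    [NormedAddCommGroup L] [NormedSpace 𝕜 L] {B : E →L[𝕜] F} {D : E →L[𝕜] K} {D' : F →L[𝕜] L}
    {c : ℝ} (hc : 0 ≤ c) (h : ∀ x y, ‖inner 𝕜 (B x) y‖ ≤ c * ‖D x‖ * ‖D' y‖) (x : E) :
    ‖B x‖ ≤ c * ‖D'‖ * ‖D x‖ := by
  rw [← innerSL_apply_norm 𝕜 (B x)]
  refine opNorm_le_bound _ (by positivity) fun y ↦ ?_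
  calc ‖inner 𝕜 (B x) y‖ ≤ c * ‖D x‖ * ‖D' y‖ := h x y
    _ ≤ c * ‖D x‖ * (‖D'‖ * ‖y‖) := by gcongr; exact D'.le_opNorm y
    _ = c * ‖D'‖ * ‖D x‖ * ‖y‖ := by ring

variable [CompleteSpace F] [NormedAddCommGroup K] [InnerProductSpace 𝕜 K] [CompleteSpace K]

theorem norm_adjoint_apply_le_of_norm_inner_le [NormedAddCommGroup L] [NormedSpace 𝕜 L]
    {G : K →L[𝕜] F} {D : E →L[𝕜] K} {D' : F →L[𝕜] L} {c : ℝ} (hc : 0 ≤ c)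
    (hG : G ∘L closedRangeProjection D = G)
    (h : ∀ x y, ‖inner 𝕜 (G (D x)) y‖ ≤ c * ‖D x‖ * ‖D' y‖) (y : F) :
    ‖adjoint G y‖ ≤ c * ‖D' y‖ := by
  have represent : innerSL 𝕜 (adjoint G y) = (innerSL 𝕜 y ∘L G) ∘L closedRangeProjection D := by
    rw [comp_assoc, hG]
    ext u
    exact adjoint_inner_left G u y
  rw [← innerSL_apply_norm 𝕜 (adjoint G y), represent]
  refine opNorm_comp_closedRangeProjection_le (by positivity) fun x ↦ ?_
  calc ‖inner 𝕜 y (G (D x))‖ = ‖inner 𝕜 (G (D x)) y‖ := norm_inner_symm _ _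
    _ ≤ c * ‖D x‖ * ‖D' y‖ := h x y
    _ = c * ‖D' y‖ * ‖D x‖ := by ring

variable [NormedAddCommGroup L] [InnerProductSpace 𝕜 L] [CompleteSpace L]

theorem exists_eq_adjoint_comp_comp_of_norm_inner_le {B : E →L[𝕜] F} {D : E →L[𝕜] K}
    {D' : F →L[𝕜] L} {c : ℝ} (hc : 0 ≤ c)
    (h : ∀ x y, ‖inner 𝕜 (B x) y‖ ≤ c * ‖D x‖ * ‖D' y‖) :
    ∃ X : K →L[𝕜] L, ‖X‖ ≤ c ∧ X = closedRangeProjection D' ∘L X ∘L closedRangeProjection D ∧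
      B = adjoint D' ∘L X ∘L D := by
  obtain ⟨G, -, rfl, hGP⟩ := exists_comp_eq_of_norm_le B D (c := c * ‖D'‖) (by positivity)
    (norm_apply_le_of_norm_inner_le hc h)
  obtain ⟨Z, norm_Z, hZD', hZP⟩ := exists_comp_eq_of_norm_le (adjoint G) D' hc
    (norm_adjoint_apply_le_of_norm_inner_le hc hGP h)
  have hPG : closedRangeProjection D ∘L adjoint G = adjoint G := by
    rw [← adjoint_closedRangeProjection D, ← adjoint_comp, hGP]
  have hPZ : closedRangeProjection D ∘L Z = Z := by
    have agree_on_range : (closedRangeProjection D ∘L Z) ∘L D' = Z ∘L D' := by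
      rw [comp_assoc, hZD', hPG]
    simpa only [comp_assoc, hZP] using comp_closedRangeProjection_eq_of_comp_eq agree_on_range
  refine ⟨adjoint Z, ?_, ?_, ?_⟩
  · rwa [LinearIsometryEquiv.norm_map]
  · rw [← adjoint_closedRangeProjection D, ← adjoint_comp, hPZ,
      ← adjoint_closedRangeProjection D', ← adjoint_comp, hZP]
  · rw [← comp_assoc, ← adjoint_comp, hZD', adjoint_adjoint]

theorem closedRangeProjection_comp_eq_of_adjoint_comp_eq {G : Type*} [NormedAddCommGroup G]
    [InnerProductSpace 𝕜 G] [CompleteSpace G] {D : F →L[𝕜] L} {X Y : G →L[𝕜] L}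
    (h : adjoint D ∘L X = adjoint D ∘L Y) :
    closedRangeProjection D ∘L X = closedRangeProjection D ∘L Y := by
  have h_adj : adjoint X ∘L D = adjoint Y ∘L D := by
    simpa only [adjoint_comp, adjoint_adjoint] using congr(adjoint $h)
  simpa only [adjoint_comp, adjoint_adjoint, adjoint_closedRangeProjection] using
    congr(adjoint $(comp_closedRangeProjection_eq_of_comp_eq h_adj))

theorem eq_of_adjoint_comp_comp_eq {D : E →L[𝕜] K} {D' : F →L[𝕜] L} {X Y : K →L[𝕜] L}
    (hX : X = closedRangeProjection D' ∘L X ∘L closedRangeProjection D)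
    (hY : Y = closedRangeProjection D' ∘L Y ∘L closedRangeProjection D)
    (h : adjoint D' ∘L X ∘L D = adjoint D' ∘L Y ∘L D) : X = Y := by
  rw [hX, hY]
  refine closedRangeProjection_comp_eq_of_adjoint_comp_eq ?_
  rw [← comp_assoc, ← comp_assoc]
  exact comp_closedRangeProjection_eq_of_comp_eq h

end SesquilinearFactorization

section Defect

variable {𝕜 E F K : Type*} [RCLike 𝕜]
  [NormedAddCommGroup E] [InnerProductSpace 𝕜 E] [CompleteSpace E]
  [NormedAddCommGroup F] [InnerProductSpace 𝕜 F] [CompleteSpace F]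
  [NormedAddCommGroup K] [InnerProductSpace 𝕜 K] [CompleteSpace K]

theorem re_inner_one_sub_adjoint_comp_self_apply (T : E →L[𝕜] F) (x : E) :
    RCLike.re (inner 𝕜 ((1 - adjoint T ∘L T) x) x) = ‖x‖ ^ 2 - ‖T x‖ ^ 2 := by
  rw [sub_apply, one_apply_eq_self, inner_sub_left, map_sub, inner_self_eq_norm_sq,
    ← apply_norm_sq_eq_inner_adjoint_left]

theorem isPositive_one_sub_adjoint_comp_self {T : E →L[𝕜] F} (hT : ‖T‖ ≤ 1) :
    (1 - adjoint T ∘L T).IsPositive := by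
  have self_adjoint : IsSelfAdjoint (1 - adjoint T ∘L T) :=
    (IsSelfAdjoint.one _).sub (isPositive_adjoint_comp_self T).isSelfAdjoint
  refine isPositive_def'.2 ⟨self_adjoint, fun x ↦ ?_⟩
  rw [reApplyInnerSelf_apply, re_inner_one_sub_adjoint_comp_self_apply, sub_nonneg]
  gcongr
  simpa using T.le_of_opNorm_le hT x

theorem norm_sq_apply_of_adjoint_comp_self_eq {T : E →L[𝕜] F} {D : E →L[𝕜] K}
    (hD : adjoint D ∘L D = 1 - adjoint T ∘L T) (x : E) : ‖D x‖ ^ 2 = ‖x‖ ^ 2 - ‖T x‖ ^ 2 := by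
  rw [apply_norm_sq_eq_inner_adjoint_left, hD, re_inner_one_sub_adjoint_comp_self_apply]

variable {T₁ T₂ : E →L[𝕜] E} {D : E →L[𝕜] K}

theorem norm_inner_sub_adjoint_comp_apply_le (hT₁ : ‖T₁‖ ≤ 1) (hT₂ : ‖T₂‖ ≤ 1)
    (hcomm : Commute T₁ T₂) (hD : adjoint D ∘L D = 1 - adjoint (T₁ * T₂) ∘L (T₁ * T₂)) (x y : E) :
    ‖inner 𝕜 ((T₁ - adjoint T₂ * (T₁ * T₂)) x) y‖ ≤ ‖D x‖ * ‖D y‖ := by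
  have factor : T₁ - adjoint T₂ * (T₁ * T₂) = (1 - adjoint T₂ * T₂) * T₁ := by
    rw [hcomm.eq, sub_mul, one_mul, mul_assoc]
  have contract (z : E) : ‖T₁ z‖ ≤ ‖z‖ := by simpa using T₁.le_of_opNorm_le hT₁ z
  have norm_D := norm_sq_apply_of_adjoint_comp_self_eq hD
  have left_le : ‖T₁ x‖ ^ 2 - ‖T₂ (T₁ x)‖ ^ 2 ≤ ‖D x‖ ^ 2 := by
    rw [norm_D, hcomm.eq, mul_apply_eq_comp]
    gcongr
    exact contract x
  have right_le : ‖y‖ ^ 2 - ‖T₂ y‖ ^ 2 ≤ ‖D y‖ ^ 2 := by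
    rw [norm_D, mul_apply_eq_comp]
    gcongr
    exact contract (T₂ y)
  have right_nonneg : 0 ≤ ‖y‖ ^ 2 - ‖T₂ y‖ ^ 2 := by
    rw [← re_inner_one_sub_adjoint_comp_self_apply]
    exact (isPositive_one_sub_adjoint_comp_self hT₂).re_inner_nonneg_left y
  refine le_of_sq_le_sq ?_ (by positivity)
  rw [factor, mul_pow]
  calc ‖inner 𝕜 ((1 - adjoint T₂ ∘L T₂) (T₁ x)) y‖ ^ 2
      ≤ RCLike.re (inner 𝕜 ((1 - adjoint T₂ ∘L T₂) (T₁ x)) (T₁ x)) *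
          RCLike.re (inner 𝕜 ((1 - adjoint T₂ ∘L T₂) y) y) :=
        norm_inner_apply_sq_le_of_isPositive
          (isPositive_one_sub_adjoint_comp_self hT₂).toLinearMap (T₁ x) y
    _ = (‖T₁ x‖ ^ 2 - ‖T₂ (T₁ x)‖ ^ 2) * (‖y‖ ^ 2 - ‖T₂ y‖ ^ 2) := by
        simp only [re_inner_one_sub_adjoint_comp_self_apply]
    _ ≤ ‖D x‖ ^ 2 * ‖D y‖ ^ 2 := by gcongr

theorem exists_fundamental_operator (hT₁ : ‖T₁‖ ≤ 1) (hT₂ : ‖T₂‖ ≤ 1) (hcomm : Commute T₁ T₂)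
    (hD : adjoint D ∘L D = 1 - adjoint (T₁ * T₂) ∘L (T₁ * T₂)) :
    ∃ F : K →L[𝕜] K, ‖F‖ ≤ 1 ∧ F = closedRangeProjection D ∘L F ∘L closedRangeProjection D ∧
      T₁ - adjoint T₂ * (T₁ * T₂) = adjoint D ∘L F ∘L D :=
  exists_eq_adjoint_comp_comp_of_norm_inner_le zero_le_one fun x y ↦ by
    simpa only [one_mul] using norm_inner_sub_adjoint_comp_apply_le hT₁ hT₂ hcomm hD x y

end Defect

theorem fundamental_operators_general {𝕜 H K : Type*} [RCLike 𝕜]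
    [NormedAddCommGroup H] [InnerProductSpace 𝕜 H] [CompleteSpace H]
    [NormedAddCommGroup K] [InnerProductSpace 𝕜 K] [CompleteSpace K]
    (T₁ T₂ : H →L[𝕜] H) (D : H →L[𝕜] K) (p : K →L[𝕜] K)
    (hT₁ : ‖T₁‖ ≤ 1) (hT₂ : ‖T₂‖ ≤ 1) (hcomm : Commute T₁ T₂)
    (hD : adjoint D ∘L D = 1 - adjoint (T₁ * T₂) ∘L (T₁ * T₂))
    (hp : IsStarProjection p) (hprange : Set.range p = closure (Set.range D)) :
    (∃ F₁ F₂ : K →L[𝕜] K, ‖F₁‖ ≤ 1 ∧ ‖F₂‖ ≤ 1 ∧ F₁ = p ∘L F₁ ∘L p ∧ F₂ = p ∘L F₂ ∘L p ∧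
      T₁ - adjoint T₂ * (T₁ * T₂) = adjoint D ∘L F₁ ∘L D ∧
      T₂ - adjoint T₁ * (T₁ * T₂) = adjoint D ∘L F₂ ∘L D) ∧
    (∀ F F' : K →L[𝕜] K, F = p ∘L F ∘L p → F' = p ∘L F' ∘L p →
      adjoint D ∘L F ∘L D = adjoint D ∘L F' ∘L D → F = F') := by
  obtain rfl := eq_closedRangeProjection hp hprange
  obtain ⟨F₁, norm_F₁, supp_F₁, eq_F₁⟩ := exists_fundamental_operator hT₁ hT₂ hcomm hD
  obtain ⟨F₂, norm_F₂, supp_F₂, eq_F₂⟩ :=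
    exists_fundamental_operator hT₂ hT₁ hcomm.symm (hcomm.eq ▸ hD)
  rw [← hcomm.eq] at eq_F₂
  exact ⟨⟨F₁, F₂, norm_F₁, norm_F₂, supp_F₁, supp_F₂, eq_F₁, eq_F₂⟩,
    fun _ _ ↦ eq_of_adjoint_comp_comp_eq⟩

/-- **Fundamental operators.** Let `T₁, T₂` be commuting contractions, `T = T₁T₂`, `D` the
defect operator of `T` (positive square root of `I - T*T`), and `p` the orthogonal projection
onto `𝒟_T = closure (range D)`.  Then there exist unique contractions `F₁, F₂` supported on
`𝒟_T` (i.e. `Fᵢ = p Fᵢ p`) with `T₁ - T₂* T = D F₁ D` and `T₂ - T₁* T = D F₂ D`. -/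
theorem fundamental_operators {H : Type*} [NormedAddCommGroup H] [InnerProductSpace ℂ H]
    [CompleteSpace H] (T₁ T₂ D p : H →L[ℂ] H)
    (hT₁ : ‖T₁‖ ≤ 1) (hT₂ : ‖T₂‖ ≤ 1) (hcomm : T₁ * T₂ = T₂ * T₁)
    (hDpos : D.IsPositive) (hDsq : D * D = 1 - adjoint (T₁ * T₂) * (T₁ * T₂))
    (hpadj : adjoint p = p) (hpidem : p * p = p)
    (hprange : Set.range p = closure (Set.range D)) :
    (∃ F₁ F₂ : H →L[ℂ] H, ‖F₁‖ ≤ 1 ∧ ‖F₂‖ ≤ 1 ∧ F₁ = p * F₁ * p ∧ F₂ = p * F₂ * p ∧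
      T₁ - adjoint T₂ * (T₁ * T₂) = D * F₁ * D ∧
      T₂ - adjoint T₁ * (T₁ * T₂) = D * F₂ * D) ∧
    (∀ F F' : H →L[ℂ] H, F = p * F * p → F' = p * F' * p →
      D * F * D = D * F' * D → F = F') := by
  have hDadj : adjoint D = D := hDpos.isSelfAdjoint.adjoint_eq
  simpa only [hDadj] using! fundamental_operators_general T₁ T₂ D p hT₁ hT₂ hcomm
    (by rw [hDadj]; exact hDsq) ⟨hpidem, hpadj⟩ hprange
end

section
/- Let T₁ and T₂ be commuting contractions on a complex Hilbert space H and T = T₁T₂. Then there exist a complex Hilbert space K, a linear isometry Π : H → K, contractions W₁, W₂ on K, and an isometry W on K such that: Π ∘ T₁* = W₁* ∘ Π, Π ∘ T₂* = W₂* ∘ Π, Π ∘ T* = W* ∘ Π; W is a minimal isometric dilation of T, i.e. K equals the closed linear span of { Wⁿ(Πh) : n ∈ ℕ, h ∈ H }; W₁W = WW₁ and W₂W = WW₂; and W₁ = W₂*W. -/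
open ContinuousLinearMap

universe u

/-!
Let `D₁`, `D₂` be defect operators of `T₁`, `T₂` with orthogonal ranges in a common Hilbert space
`F`. On `H ⊕ ℓ²(F ⊕ F)` Schäffer's isometries `Sᵢ (h, e) = (Tᵢ h, Dᵢ h, e)` are coextensions of
`T₁` and `T₂`, and they commute up to a unitary of `F ⊕ F` that takes `(D₁ T₂ h, D₂ h)` to
`(D₂ T₁ h, D₁ h)`. Such a unitary exists: both vectors have squared norm `‖h‖² - ‖T₁ T₂ h‖²`, and
the two families of vectors are orthogonal, so a reflection exchanges them. Composing `S₁` with this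
unitary and `S₂` with its inverse makes them commute (Andô's theorem), giving isometric coextensions
`V₁`, `V₂` of `T₁`, `T₂`.

The isometry `V = V₁ V₂` is a coextension of `T₁ T₂`, and therefore the closed span of all `Vⁿ h`
reduces `V`. Compressing `V₁`, `V₂` and `V` to this subspace keeps the relations `Vᵢ V = V Vᵢ` and
`V₁ = V₂* V`, since one factor of each product is `V`; the compressions of `V₁` and `V₂` themselves
may fail to commute.
-/

universe v

section Defect

variable {𝕜 : Type v} [RCLike 𝕜] {H : Type u} [NormedAddCommGroup H] [InnerProductSpace 𝕜 H]
  {E F : Type*} [NormedAddCommGroup E] [InnerProductSpace 𝕜 E]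
  [NormedAddCommGroup F] [InnerProductSpace 𝕜 F]

/-- `D` is a defect operator of `T`, measuring how far the contraction `T` is from being isometric:
`T* T + D* D = 1`, in weak form so that no completeness is needed. The codomain of `D` is arbitrary,
so that the defect operators of two contractions can have orthogonal ranges in a common space. -/
def IsDefectOperator (T : H →L[𝕜] H) (D : H →L[𝕜] E) : Prop :=
  ∀ h k, inner 𝕜 (T h) (T k) + inner 𝕜 (D h) (D k) = inner 𝕜 h k

namespace IsDefectOperator

variable {T : H →L[𝕜] H} {D : H →L[𝕜] E}

theorem norm_sq_add_norm_sq (hD : IsDefectOperator T D) (h : H) :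
    ‖T h‖ ^ 2 + ‖D h‖ ^ 2 = ‖h‖ ^ 2 := by
  simpa only [map_add, inner_self_eq_norm_sq] using congrArg RCLike.re (hD h h)

theorem linearIsometry_comp (hD : IsDefectOperator T D) (J : E →ₗᵢ[𝕜] F) :
    IsDefectOperator T (J.toContinuousLinearMap ∘L D) := fun h k => by
  simpa only [comp_apply, LinearIsometry.coe_toContinuousLinearMap, J.inner_map_map] using hD h k

end IsDefectOperator

variable (𝕜 E F) in
/-- The inclusion of the first summand in the Hilbert sum `E ⊕ F`. -/
noncomputable def l2Inl : E →ₗᵢ[𝕜] WithLp 2 (E × F) where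
  toLinearMap := (WithLp.linearEquiv 2 𝕜 (E × F)).symm.toLinearMap ∘ₗ LinearMap.inl 𝕜 E F
  norm_map' := WithLp.norm_toLp_fst 2 E F

variable (𝕜 E F) in
/-- The inclusion of the second summand in the Hilbert sum `E ⊕ F`. -/
noncomputable def l2Inr : F →ₗᵢ[𝕜] WithLp 2 (E × F) where
  toLinearMap := (WithLp.linearEquiv 2 𝕜 (E × F)).symm.toLinearMap ∘ₗ LinearMap.inr 𝕜 E F
  norm_map' := WithLp.norm_toLp_snd 2 E F

theorem inner_l2Inl_left (x : E) (y : WithLp 2 (E × F)) :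
    inner 𝕜 (l2Inl 𝕜 E F x) y = inner 𝕜 x y.fst := by
  change inner 𝕜 x y.fst + inner 𝕜 0 y.snd = _
  rw [inner_zero_left, add_zero]

theorem inner_l2Inl_l2Inr (x : E) (y : F) :
    inner 𝕜 (l2Inl 𝕜 E F x) (l2Inr 𝕜 E F y) = 0 :=
  (inner_l2Inl_left x _).trans (inner_zero_right x)

variable [CompleteSpace H]

-- A one-point kernel turns `A` into a reproducing kernel Hilbert space; unlike the square root of
-- the functional calculus this also covers real scalars.
theorem exists_inner_map_map_of_isPositive {A : H →L[𝕜] H} (hA : A.IsPositive) :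
    ∃ (E : Type max u v) (_ : NormedAddCommGroup E) (_ : InnerProductSpace 𝕜 E)
      (_ : CompleteSpace E) (D : H →L[𝕜] E), ∀ h k, inner 𝕜 (D h) (D k) = inner 𝕜 (A h) k := by
  let κ : Matrix Unit Unit (H →L[𝕜] H) := Matrix.of fun _ _ => A
  have hκ : κ.PosSemidef ↔ _ := RKHS.posSemidef_tfae.out 0 2
  have : Fact κ.PosSemidef := by
    refine ⟨hκ.mpr ⟨Matrix.IsHermitian.ext fun _ _ => hA.isSelfAdjoint.star_eq, fun x => ?_⟩⟩
    simpa [κ, Finsupp.sum_fintype] using hA.re_inner_nonneg_left (x ())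
  refine ⟨RKHS.OfKernel κ, inferInstance, inferInstance, inferInstance,
    RKHS.kerFun (RKHS.OfKernel κ) (), fun h k => ?_⟩
  rw [← RKHS.kernel_inner, RKHS.OfKernel.kernel_ofKernel]
  rfl

theorem isPositive_one_sub_adjoint_mul_self {T : H →L[𝕜] H} (hT : ‖T‖ ≤ 1) :
    (1 - adjoint T * T).IsPositive := by
  refine isPositive_def'.mpr
    ⟨(IsSelfAdjoint.one _).sub (IsSelfAdjoint.star_mul_self T), fun h => ?_⟩
  have hTh : ‖T h‖ ≤ ‖h‖ := by simpa using T.le_of_opNorm_le hT h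
  have hsq : ‖T h‖ ^ 2 ≤ ‖h‖ ^ 2 := by gcongr
  simpa [reApplyInnerSelf_apply, inner_sub_left, adjoint_inner_left] using hsq

theorem exists_isDefectOperator {T : H →L[𝕜] H} (hT : ‖T‖ ≤ 1) :
    ∃ (E : Type max u v) (_ : NormedAddCommGroup E) (_ : InnerProductSpace 𝕜 E)
      (_ : CompleteSpace E) (D : H →L[𝕜] E), IsDefectOperator T D := by
  obtain ⟨E, i₁, i₂, i₃, D, hD⟩ :=
    exists_inner_map_map_of_isPositive (isPositive_one_sub_adjoint_mul_self hT)
  refine ⟨E, i₁, i₂, i₃, D, fun h k => ?_⟩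
  rw [hD]
  simp [inner_sub_left, adjoint_inner_left]

theorem exists_orthogonal_isDefectOperator {T₁ T₂ : H →L[𝕜] H} (hT₁ : ‖T₁‖ ≤ 1)
    (hT₂ : ‖T₂‖ ≤ 1) :
    ∃ (F : Type max u v) (_ : NormedAddCommGroup F) (_ : InnerProductSpace 𝕜 F)
      (_ : CompleteSpace F) (D₁ D₂ : H →L[𝕜] F),
      IsDefectOperator T₁ D₁ ∧ IsDefectOperator T₂ D₂ ∧ ∀ h k, inner 𝕜 (D₁ h) (D₂ k) = 0 := by
  obtain ⟨E₁, _, _, _, D₁, hD₁⟩ := exists_isDefectOperator hT₁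
  obtain ⟨E₂, _, _, _, D₂, hD₂⟩ := exists_isDefectOperator hT₂
  exact ⟨WithLp 2 (E₁ × E₂), inferInstance, inferInstance, inferInstance, _, _,
    hD₁.linearIsometry_comp (l2Inl 𝕜 E₁ E₂), hD₂.linearIsometry_comp (l2Inr 𝕜 E₁ E₂),
    fun h k => inner_l2Inl_l2Inr (D₁ h) (D₂ k)⟩

end Defect

section Swap

variable {𝕜 : Type*} [RCLike 𝕜] {H E F : Type*} [NormedAddCommGroup H] [InnerProductSpace 𝕜 H]
  [NormedAddCommGroup E] [InnerProductSpace 𝕜 E] [CompleteSpace E]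
  [NormedAddCommGroup F] [InnerProductSpace 𝕜 F] [CompleteSpace F]

-- The reflection that negates the range of `a - b` fixes the range of `a + b`.
theorem exists_linearIsometryEquiv_map_eq {X : Type*} [AddCommGroup X] [Module 𝕜 X]
    {a b : X →ₗ[𝕜] E} (hab : ∀ x y, inner 𝕜 (a x) (b y) = 0)
    (heq : ∀ x y, inner 𝕜 (a x) (a y) = inner 𝕜 (b x) (b y)) :
    ∃ G : E ≃ₗᵢ[𝕜] E, ∀ x, G (a x) = b x := by
  let N : Submodule 𝕜 E := (LinearMap.range (a - b)).topologicalClosure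
  refine ⟨Nᗮ.reflection, fun x => ?_⟩
  have hsub : Nᗮ.reflection (a x - b x) = -(a x - b x) :=
    Submodule.reflection_mem_subspace_orthogonal_precomplement_eq_neg
      (Submodule.le_topologicalClosure _ ⟨x, rfl⟩)
  have hadd : Nᗮ.reflection (a x + b x) = a x + b x := by
    have hba : ∀ x y, inner 𝕜 (b x) (a y) = 0 := fun x y => inner_eq_zero_symm.mp (hab y x)
    apply Submodule.reflection_mem_subspace_eq_self
    rw [Submodule.orthogonal_closure, Submodule.mem_orthogonal]
    rintro _ ⟨y, rfl⟩
    simp [inner_sub_left, inner_add_right, hab, hba, heq]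
  calc Nᗮ.reflection (a x)
      = Nᗮ.reflection ((2⁻¹ : 𝕜) • ((a x + b x) + (a x - b x))) := by congr 1; module
    _ = (2⁻¹ : 𝕜) • ((a x + b x) + -(a x - b x)) := by rw [map_smul, map_add, hadd, hsub]
    _ = b x := by module

theorem exists_linearIsometryEquiv_swap_defect {T₁ T₂ : H →L[𝕜] H} (hcomm : T₁ * T₂ = T₂ * T₁)
    {D₁ D₂ : H →L[𝕜] F} (hD₁ : IsDefectOperator T₁ D₁) (hD₂ : IsDefectOperator T₂ D₂)
    (horth : ∀ h k, inner 𝕜 (D₁ h) (D₂ k) = 0) :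
    ∃ G : WithLp 2 (F × F) ≃ₗᵢ[𝕜] WithLp 2 (F × F), ∀ h,
      G (WithLp.toLp 2 (D₁ (T₂ h), D₂ h)) = WithLp.toLp 2 (D₂ (T₁ h), D₁ h) := by
  let pair (A B : H →L[𝕜] F) : H →ₗ[𝕜] WithLp 2 (F × F) :=
    (WithLp.linearEquiv 2 𝕜 (F × F)).symm.toLinearMap ∘ₗ (A.prod B).toLinearMap
  have inner_pair (A B A' B' : H →L[𝕜] F) (h k : H) :
      inner 𝕜 (pair A B h) (pair A' B' k) = inner 𝕜 (A h) (A' k) + inner 𝕜 (B h) (B' k) := rfl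
  have hcomm_apply (h : H) : T₁ (T₂ h) = T₂ (T₁ h) := congr($hcomm h)
  refine exists_linearIsometryEquiv_map_eq (a := pair (D₁ ∘L T₂) D₂) (b := pair (D₂ ∘L T₁) D₁)
    (fun h k => ?_) fun h k => ?_
  · simp only [inner_pair, comp_apply, horth, inner_eq_zero_symm.mp (horth _ _), add_zero]
  · apply add_left_cancel (a := inner 𝕜 (T₁ (T₂ h)) (T₁ (T₂ k)))
    calc inner 𝕜 (T₁ (T₂ h)) (T₁ (T₂ k)) +
          (inner 𝕜 (D₁ (T₂ h)) (D₁ (T₂ k)) + inner 𝕜 (D₂ h) (D₂ k))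
        = inner 𝕜 h k := by rw [← add_assoc, hD₁, hD₂]
      _ = inner 𝕜 (T₁ (T₂ h)) (T₁ (T₂ k)) +
          (inner 𝕜 (D₂ (T₁ h)) (D₂ (T₁ k)) + inner 𝕜 (D₁ h) (D₁ k)) := by
        rw [hcomm_apply, hcomm_apply, ← add_assoc, hD₂, hD₁]

end Swap

section SquareSummable

variable {𝕜 : Type*} [NormedField 𝕜] {ι : Type*} {E F : ι → Type*}
  [∀ i, NormedAddCommGroup (E i)] [∀ i, NormedSpace 𝕜 (E i)]
  [∀ i, NormedAddCommGroup (F i)] [∀ i, NormedSpace 𝕜 (F i)]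

theorem hasSum_norm_sq (e : lp E 2) : HasSum (fun i => ‖e i‖ ^ 2) (‖e‖ ^ 2) := by
  simpa using lp.hasSum_norm (by simp) e

/-- The linear isometry into `ℓ²` with prescribed coordinate maps. -/
noncomputable def l2Isometry {X : Type*} [SeminormedAddCommGroup X] [NormedSpace 𝕜 X]
    (A : X →ₗ[𝕜] ∀ i, E i) (hA : ∀ x, HasSum (fun i => ‖A x i‖ ^ 2) (‖x‖ ^ 2)) :
    X →ₗᵢ[𝕜] lp E 2 where
  toFun x := ⟨A x, memℓp_gen (by simpa using (hA x).summable)⟩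
  map_add' x y := lp.ext (map_add A x y)
  map_smul' c x := lp.ext (map_smul A c x)
  norm_map' x := by
    rw [← sq_eq_sq₀ (norm_nonneg _) (norm_nonneg _)]
    exact (hasSum_norm_sq _).unique (hA x)

/-- Coordinatewise application of linear isometries, as a linear isometry of `ℓ²` sums. -/
noncomputable def l2Map (G : ∀ i, E i →ₗᵢ[𝕜] F i) : lp E 2 →ₗᵢ[𝕜] lp F 2 :=
  l2Isometry (LinearMap.pi fun i => (G i).toLinearMap ∘ₗ lp.evalₗ E 2 i) fun e => by
    simpa using hasSum_norm_sq e

/-- Coordinatewise application of isometric isomorphisms, as an isometric isomorphism of `ℓ²`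
sums. -/
noncomputable def l2Congr (G : ∀ i, E i ≃ₗᵢ[𝕜] F i) : lp E 2 ≃ₗᵢ[𝕜] lp F 2 where
  toLinearEquiv := LinearEquiv.ofLinearMap (l2Map fun i => (G i).toLinearIsometry).toLinearMap
    (l2Map fun i => (G i).symm.toLinearIsometry).toLinearMap
    (LinearMap.ext fun e => lp.ext <| funext fun i => (G i).apply_symm_apply (e i))
    (LinearMap.ext fun e => lp.ext <| funext fun i => (G i).symm_apply_apply (e i))
  norm_map' := (l2Map fun i => (G i).toLinearIsometry).norm_map

theorem l2Congr_apply (G : ∀ i, E i ≃ₗᵢ[𝕜] F i) (e : lp E 2) (i : ι) :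
    l2Congr G e i = G i (e i) := rfl

end SquareSummable

section PairShift

variable {𝕜 : Type*} [NormedField 𝕜] {F : Type*}

/-- Reading a sequence of pairs in `F` as a sequence in `F`, prepend `x` to it. -/
def consPairs (x : F) (e : ℕ → WithLp 2 (F × F)) : ℕ → WithLp 2 (F × F)
  | 0 => WithLp.toLp 2 (x, (e 0).fst)
  | n + 1 => WithLp.toLp 2 ((e n).snd, (e (n + 1)).fst)

theorem consPairs_consPairs_succ (x y : F) (e : ℕ → WithLp 2 (F × F)) (n : ℕ) :
    consPairs x (consPairs y e) (n + 1) = e n := by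
  cases n <;> rfl

variable [NormedAddCommGroup F]

theorem hasSum_norm_sq_consPairs {x : F} {e : ℕ → WithLp 2 (F × F)} {s : ℝ}
    (he : HasSum (fun n => ‖e n‖ ^ 2) s) :
    HasSum (fun n => ‖consPairs x e n‖ ^ 2) (‖x‖ ^ 2 + s) := by
  simp only [WithLp.prod_norm_sq_eq_of_L2] at he ⊢
  obtain ⟨a, hfst⟩ : Summable fun n => ‖(e n).fst‖ ^ 2 :=
    he.summable.of_nonneg_of_le (fun _ => by positivity) fun _ => by simp
  obtain ⟨b, hsnd⟩ : Summable fun n => ‖(e n).snd‖ ^ 2 :=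
    he.summable.of_nonneg_of_le (fun _ => by positivity) fun _ => by simp
  have hfst' : HasSum (fun n => ‖(consPairs x e n).fst‖ ^ 2) (‖x‖ ^ 2 + b) :=
    HasSum.zero_add (f := fun n => ‖(consPairs x e n).fst‖ ^ 2) hsnd
  have hsnd' : HasSum (fun n => ‖(consPairs x e n).snd‖ ^ 2) a := by
    convert hfst using 2 with n
    cases n <;> rfl
  rw [he.unique (hfst.add hsnd), add_comm a b, ← add_assoc]
  exact hfst'.add hsnd'

variable (F) in
/-- The Hilbert sum `ℓ²(ℕ, F ⊕ F)`. -/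
abbrev L2Pairs : Type _ := lp (fun _ : ℕ => WithLp 2 (F × F)) 2

variable [NormedSpace 𝕜 F]

variable (𝕜 F) in
/-- `consPairs` as a linear isometry `F ⊕ ℓ²(ℕ, F ⊕ F) → ℓ²(ℕ, F ⊕ F)`. -/
noncomputable def pairShift : WithLp 2 (F × L2Pairs F) →ₗᵢ[𝕜] L2Pairs F :=
  l2Isometry
    { toFun := fun z => consPairs z.fst z.snd
      map_add' := fun z w => by ext n : 1; cases n <;> rfl
      map_smul' := fun c z => by ext n : 1; cases n <;> rfl }
    fun z => by
      rw [WithLp.prod_norm_sq_eq_of_L2]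
      exact hasSum_norm_sq_consPairs (hasSum_norm_sq z.snd)

theorem l2Congr_pairShift_pairShift {G : WithLp 2 (F × F) ≃ₗᵢ[𝕜] WithLp 2 (F × F)}
    {x y x' y' : F} (hG : G (.toLp 2 (x, y)) = .toLp 2 (x', y')) (e : L2Pairs F) :
    l2Congr (fun _ => G) (pairShift 𝕜 F (.toLp 2 (x, pairShift 𝕜 F (.toLp 2 (y, e))))) =
      pairShift 𝕜 F (.toLp 2 (x', pairShift 𝕜 F (.toLp 2 (y', l2Congr (fun _ => G) e)))) := by
  refine lp.ext (funext fun n => ?_)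
  cases n with
  | zero => exact hG
  | succ n =>
    calc G (consPairs x (consPairs y e) (n + 1)) = G (e n) := by rw [consPairs_consPairs_succ]
      _ = consPairs x' (consPairs y' (l2Congr (fun _ => G) e)) (n + 1) := by
        rw [consPairs_consPairs_succ, l2Congr_apply]

end PairShift

section Coextension

variable {𝕜 : Type*} [RCLike 𝕜] {H L F M : Type*}
  [NormedAddCommGroup H] [InnerProductSpace 𝕜 H]
  [NormedAddCommGroup L] [InnerProductSpace 𝕜 L] [CompleteSpace L]
  [NormedAddCommGroup F] [InnerProductSpace 𝕜 F]
  [NormedAddCommGroup M] [InnerProductSpace 𝕜 M]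

/-- The isometry `h ↦ (T h, D h)` given by a defect operator `D` of `T`. -/
noncomputable def IsDefectOperator.toLinearIsometry {T : H →L[𝕜] H} {D : H →L[𝕜] F}
    (hD : IsDefectOperator T D) : H →ₗᵢ[𝕜] WithLp 2 (H × F) where
  toLinearMap := (WithLp.linearEquiv 2 𝕜 (H × F)).symm.toLinearMap ∘ₗ (T.prod D).toLinearMap
  norm_map' h := by
    rw [← sq_eq_sq₀ (norm_nonneg _) (norm_nonneg _), ← hD.norm_sq_add_norm_sq h]
    exact WithLp.prod_norm_sq_eq_of_L2 _

/-- Schäffer's isometric coextension `(h, m) ↦ (T h, C (D h, m))` of `T`, built from a defect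
operator `D` of `T` and an isometry `C` that makes room for the values of `D`. -/
noncomputable def schaefferIsometry {T : H →L[𝕜] H} {D : H →L[𝕜] F} (hD : IsDefectOperator T D)
    (C : WithLp 2 (F × M) →ₗᵢ[𝕜] M) : WithLp 2 (H × M) →ₗᵢ[𝕜] WithLp 2 (H × M) :=
  (LinearIsometry.id.withLpProdMap 2 C).comp <|
    (LinearIsometryEquiv.withLpProdAssoc 2 𝕜 H F M).toLinearIsometry.comp <|
      hD.toLinearIsometry.withLpProdMap 2 LinearIsometry.id

variable [CompleteSpace H]

/-- `V` is a coextension of `T` along the isometric embedding `J`: the copy of the domain of `T`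
is invariant under `V*`, and `V*` acts on it as `T*`. -/
def IsCoextension (J : H →ₗᵢ[𝕜] L) (T : H →L[𝕜] H) (V : L →L[𝕜] L) : Prop :=
  ∀ h, J (adjoint T h) = adjoint V (J h)

theorem IsCoextension.mul {J : H →ₗᵢ[𝕜] L} {T₁ T₂ : H →L[𝕜] H} {V₁ V₂ : L →L[𝕜] L}
    (h₁ : IsCoextension J T₁ V₁) (h₂ : IsCoextension J T₂ V₂) :
    IsCoextension J (T₁ * T₂) (V₁ * V₂) := fun h => by
  simp only [← star_eq_adjoint, star_mul]
  exact (h₂ _).trans (congrArg _ (h₁ h))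

theorem isCoextension_l2Inl [CompleteSpace M] {T : H →L[𝕜] H}
    {V : WithLp 2 (H × M) →L[𝕜] WithLp 2 (H × M)} (hV : ∀ z, (V z).fst = T z.fst) :
    IsCoextension (l2Inl 𝕜 H M) T V := fun h =>
  ext_inner_right 𝕜 fun z => by
    rw [inner_l2Inl_left, adjoint_inner_left, adjoint_inner_left, inner_l2Inl_left, hV]

end Coextension

section Ando

variable {𝕜 : Type v} [RCLike 𝕜] {H : Type u} [NormedAddCommGroup H] [InnerProductSpace 𝕜 H]
  [CompleteSpace H]

theorem exists_commuting_isometric_coextensions {T₁ T₂ : H →L[𝕜] H} (hT₁ : ‖T₁‖ ≤ 1)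
    (hT₂ : ‖T₂‖ ≤ 1) (hcomm : T₁ * T₂ = T₂ * T₁) :
    ∃ (L : Type max u v) (_ : NormedAddCommGroup L) (_ : InnerProductSpace 𝕜 L)
      (_ : CompleteSpace L) (J : H →ₗᵢ[𝕜] L) (V₁ V₂ : L →ₗᵢ[𝕜] L),
      IsCoextension J T₁ V₁.toContinuousLinearMap ∧ IsCoextension J T₂ V₂.toContinuousLinearMap ∧
        Function.Commute V₁ V₂ := by
  obtain ⟨F, _, _, _, D₁, D₂, hD₁, hD₂, horth⟩ := exists_orthogonal_isDefectOperator hT₁ hT₂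
  obtain ⟨G, hG⟩ := exists_linearIsometryEquiv_swap_defect hcomm hD₁ hD₂ horth
  let Γ : WithLp 2 (H × L2Pairs F) ≃ₗᵢ[𝕜] WithLp 2 (H × L2Pairs F) :=
    (LinearIsometryEquiv.refl 𝕜 H).withLpProdCongr 2 (l2Congr fun _ => G)
  let S₁ := schaefferIsometry hD₁ (pairShift 𝕜 F)
  let S₂ := schaefferIsometry hD₂ (pairShift 𝕜 F)
  have hΓS (z) : Γ (S₁ (S₂ z)) = S₂ (S₁ (Γ z)) :=
    congrArg₂ (fun h m => WithLp.toLp 2 (h, m)) congr($hcomm z.fst)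
      (l2Congr_pairShift_pairShift (hG z.fst) z.snd)
  refine ⟨WithLp 2 (H × L2Pairs F), inferInstance, inferInstance, inferInstance,
    l2Inl 𝕜 H (L2Pairs F), Γ.toLinearIsometry.comp S₁, S₂.comp Γ.symm.toLinearIsometry,
    isCoextension_l2Inl fun _ => rfl, isCoextension_l2Inl fun _ => rfl, fun z => ?_⟩
  calc Γ (S₁ (S₂ (Γ.symm z))) = S₂ (S₁ (Γ (Γ.symm z))) := hΓS _
    _ = S₂ (Γ.symm (Γ (S₁ z))) := by rw [Γ.apply_symm_apply, Γ.symm_apply_apply]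

end Ando

section Compression

variable {𝕜 : Type*} [RCLike 𝕜] {H L : Type*}
  [NormedAddCommGroup H] [InnerProductSpace 𝕜 H]
  [NormedAddCommGroup L] [InnerProductSpace 𝕜 L]
  {U : Submodule 𝕜 L} [CompleteSpace U] {A B : L →L[𝕜] L}

variable (U A) in
/-- The compression `P_U A|_U` of `A` to the closed subspace `U`. -/
noncomputable def compression : U →L[𝕜] U :=
  U.orthogonalProjectionOnto ∘L A ∘L U.subtypeL

theorem compression_one : compression U (1 : L →L[𝕜] L) = 1 :=
  ContinuousLinearMap.ext U.orthogonalProjectionOnto_mem_subspace_eq_self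

theorem norm_compression_le : ‖compression U A‖ ≤ ‖A‖ :=
  calc ‖compression U A‖ ≤ ‖U.orthogonalProjectionOnto‖ * (‖A‖ * ‖U.subtypeL‖) :=
        (opNorm_comp_le _ _).trans (by gcongr; exact opNorm_comp_le _ _)
    _ ≤ 1 * (‖A‖ * 1) := by
        gcongr
        exacts [U.orthogonalProjectionOnto_norm_le, U.norm_subtypeL_le]
    _ = ‖A‖ := by rw [one_mul, mul_one]

theorem coe_compression_apply (hA : Set.MapsTo A U U) (x : U) : (compression U A x : L) = A x :=
  congrArg Subtype.val (U.orthogonalProjectionOnto_mem_subspace_eq_self ⟨A x, hA x.2⟩)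

theorem coe_compression_pow_apply (hA : Set.MapsTo A U U) (n : ℕ) (x : U) :
    ((compression U A ^ n) x : L) = (A ^ n) x := by
  induction n with
  | zero => rfl
  | succ n ih =>
    rw [pow_succ', pow_succ', mul_apply_eq_comp, mul_apply_eq_comp, coe_compression_apply hA, ih]

theorem compression_mul_of_mapsTo (hB : Set.MapsTo B U U) :
    compression U A * compression U B = compression U (A * B) := by
  ext1 x
  change U.orthogonalProjectionOnto (A (compression U B x)) = U.orthogonalProjectionOnto (A (B x))
  rw [coe_compression_apply hB]

/-- An isometric embedding with values in `U`, as an embedding into `U`. -/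
def isometryCodRestrict (J : H →ₗᵢ[𝕜] L) (hJ : ∀ h, J h ∈ U) : H →ₗᵢ[𝕜] U where
  toLinearMap := J.toLinearMap.codRestrict U hJ
  norm_map' := J.norm_map

variable [CompleteSpace L]

theorem adjoint_compression : adjoint (compression U A) = compression U (adjoint A) := by
  simp only [compression, adjoint_comp, Submodule.adjoint_subtypeL,
    Submodule.adjoint_orthogonalProjectionOnto, comp_assoc]

theorem compression_mul_of_mapsTo_adjoint (hA : Set.MapsTo (adjoint A) U U) :
    compression U A * compression U B = compression U (A * B) := by
  have h := congrArg adjoint (compression_mul_of_mapsTo (A := adjoint B) hA)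
  simpa only [mul_def, adjoint_comp, adjoint_compression, adjoint_adjoint] using h

theorem commute_compression (hA : Set.MapsTo A U U) (hA' : Set.MapsTo (adjoint A) U U)
    (h : Commute B A) : Commute (compression U B) (compression U A) := by
  rw [commute_iff_eq, compression_mul_of_mapsTo hA, compression_mul_of_mapsTo_adjoint hA', h.eq]

theorem IsCoextension.compression [CompleteSpace H] {J : H →ₗᵢ[𝕜] L} {T : H →L[𝕜] H}
    {V : L →L[𝕜] L} (hV : IsCoextension J T V) (hJ : ∀ h, J h ∈ U) :
    IsCoextension (isometryCodRestrict J hJ) T (compression U V) := fun h => by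
  have hproj : (⟨J (adjoint T h), hJ _⟩ : U) = U.orthogonalProjectionOnto (adjoint V (J h)) := by
    rw [← hV h]
    exact (U.orthogonalProjectionOnto_mem_subspace_eq_self ⟨_, hJ _⟩).symm
  rw [adjoint_compression]
  exact hproj

end Compression

section Orbit

variable {𝕜 : Type*} [RCLike 𝕜] {H L : Type*}
  [NormedAddCommGroup H] [InnerProductSpace 𝕜 H]
  [NormedAddCommGroup L] [InnerProductSpace 𝕜 L] {J : H →ₗᵢ[𝕜] L} {V : L →L[𝕜] L}

variable (J V) in
/-- The smallest closed `V`-invariant subspace containing the range of `J`. An isometric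
coextension `V` along `J` is minimal when this is the whole space. -/
def orbitSpace : Submodule 𝕜 L :=
  (Submodule.span 𝕜 {x : L | ∃ (n : ℕ) (h : H), x = (V ^ n) (J h)}).topologicalClosure

instance [CompleteSpace L] : CompleteSpace (orbitSpace J V) :=
  Submodule.topologicalClosure.completeSpace _

theorem pow_apply_mem_orbitSpace (n : ℕ) (h : H) : (V ^ n) (J h) ∈ orbitSpace J V :=
  Submodule.le_topologicalClosure _ (Submodule.subset_span ⟨n, h, rfl⟩)

theorem apply_mem_orbitSpace (h : H) : J h ∈ orbitSpace J V :=
  pow_apply_mem_orbitSpace 0 h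

theorem mapsTo_orbitSpace_of_forall_pow {A : L →L[𝕜] L}
    (hA : ∀ n h, A ((V ^ n) (J h)) ∈ orbitSpace J V) :
    Set.MapsTo A (orbitSpace J V) (orbitSpace J V) := by
  have hle : orbitSpace J V ≤ (orbitSpace J V).comap A.toLinearMap := by
    refine Submodule.topologicalClosure_minimal _ (Submodule.span_le.mpr ?_)
      ((Submodule.isClosed_topologicalClosure _).preimage A.continuous)
    rintro _ ⟨n, h, rfl⟩
    exact hA n h
  exact hle

theorem mapsTo_orbitSpace : Set.MapsTo V (orbitSpace J V) (orbitSpace J V) :=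
  mapsTo_orbitSpace_of_forall_pow fun n h => by
    rw [← mul_apply_eq_comp, ← pow_succ']
    exact pow_apply_mem_orbitSpace (n + 1) h

variable [CompleteSpace L]

theorem mapsTo_adjoint_orbitSpace [CompleteSpace H] {T : H →L[𝕜] H} (hV : IsCoextension J T V)
    (hiso : adjoint V * V = 1) : Set.MapsTo (adjoint V) (orbitSpace J V) (orbitSpace J V) :=
  mapsTo_orbitSpace_of_forall_pow fun n h => by
    cases n with
    | zero =>
      rw [pow_zero, one_apply_eq_self, ← hV]
      exact apply_mem_orbitSpace _
    | succ n =>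
      rw [← mul_apply_eq_comp, pow_succ', ← mul_assoc, hiso, one_mul]
      exact pow_apply_mem_orbitSpace n h

theorem orbitSpace_compression_eq_top :
    orbitSpace (isometryCodRestrict J apply_mem_orbitSpace) (compression (orbitSpace J V) V) =
      ⊤ := by
  let W := compression (orbitSpace J V) V
  let JU := isometryCodRestrict J (apply_mem_orbitSpace (V := V))
  have image_orbit : (orbitSpace J V).subtype '' {x | ∃ (n : ℕ) (h : H), x = (W ^ n) (JU h)} =
      {x | ∃ (n : ℕ) (h : H), x = (V ^ n) (J h)} := by
    have coe_pow (n : ℕ) (h : H) : (((W ^ n) (JU h) : orbitSpace J V) : L) = (V ^ n) (J h) :=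
      coe_compression_pow_apply mapsTo_orbitSpace n (JU h)
    ext x
    constructor
    · rintro ⟨_, ⟨n, h, rfl⟩, rfl⟩
      exact ⟨n, h, coe_pow n h⟩
    · rintro ⟨n, h, rfl⟩
      exact ⟨_, ⟨n, h, rfl⟩, coe_pow n h⟩
  refine Submodule.dense_iff_topologicalClosure_eq_top.mp (Subtype.dense_iff.mpr ?_)
  change _ ⊆ closure ((orbitSpace J V).subtype '' _)
  rw [← Submodule.map_coe, Submodule.map_span, image_orbit]
  exact subset_rfl

end Orbit

theorem exists_special_dilation_tuple_general {𝕜 : Type v} [RCLike 𝕜] {H : Type u}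
    [NormedAddCommGroup H] [InnerProductSpace 𝕜 H] [CompleteSpace H] (T₁ T₂ : H →L[𝕜] H)
    (hT₁ : ‖T₁‖ ≤ 1) (hT₂ : ‖T₂‖ ≤ 1) (hcomm : T₁ * T₂ = T₂ * T₁) :
    ∃ (K : Type max u v) (_ : NormedAddCommGroup K) (_ : InnerProductSpace 𝕜 K)
      (_ : CompleteSpace K) (Pi : H →ₗᵢ[𝕜] K) (W₁ W₂ W : K →L[𝕜] K),
        ‖W₁‖ ≤ 1 ∧ ‖W₂‖ ≤ 1 ∧ adjoint W * W = 1 ∧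
        (∀ h : H, Pi (adjoint T₁ h) = adjoint W₁ (Pi h)) ∧
        (∀ h : H, Pi (adjoint T₂ h) = adjoint W₂ (Pi h)) ∧
        (∀ h : H, Pi (adjoint (T₁ * T₂) h) = adjoint W (Pi h)) ∧
        (Submodule.span 𝕜
            {x : K | ∃ (n : ℕ) (h : H), x = (W ^ n) (Pi h)}).topologicalClosure = ⊤ ∧
        W₁ * W = W * W₁ ∧ W₂ * W = W * W₂ ∧
        W₁ = adjoint W₂ * W := by
  obtain ⟨L, _, _, _, J, S₁, S₂, h₁, h₂, hS⟩ :=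
    exists_commuting_isometric_coextensions hT₁ hT₂ hcomm
  let V₁ := S₁.toContinuousLinearMap
  let V₂ := S₂.toContinuousLinearMap
  let V := V₁ * V₂
  let U := orbitSpace J V
  have hV₁₂ : Commute V₁ V₂ := ContinuousLinearMap.ext hS
  have hiso₂ : adjoint V₂ * V₂ = 1 := (norm_map_iff_adjoint_comp_self V₂).mp S₂.norm_map
  have hiso : adjoint V * V = 1 := (norm_map_iff_adjoint_comp_self V).mp (S₁.comp S₂).norm_map
  have hV : Set.MapsTo V U U := mapsTo_orbitSpace
  have hV' : Set.MapsTo (adjoint V) U U := mapsTo_adjoint_orbitSpace (h₁.mul h₂) hiso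
  refine ⟨U, inferInstance, inferInstance, inferInstance,
    isometryCodRestrict J apply_mem_orbitSpace, compression U V₁, compression U V₂,
    compression U V, norm_compression_le.trans S₁.norm_toContinuousLinearMap_le,
    norm_compression_le.trans S₂.norm_toContinuousLinearMap_le, ?_, h₁.compression _,
    h₂.compression _, (h₁.mul h₂).compression _, orbitSpace_compression_eq_top,
    commute_compression hV hV' ((Commute.refl V₁).mul_right hV₁₂),
    commute_compression hV hV' (hV₁₂.symm.mul_right (Commute.refl V₂)), ?_⟩
  · rw [adjoint_compression, compression_mul_of_mapsTo hV, hiso, compression_one]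
  · have hV₁ : adjoint V₂ * V = V₁ := by
      rw [show V = V₂ * V₁ from hV₁₂, ← mul_assoc, hiso₂, one_mul]
    rw [adjoint_compression, compression_mul_of_mapsTo hV, hV₁]

/-- For commuting contractions `T₁, T₂` with `T = T₁T₂` there exist a Hilbert space `K`, a
linear isometry `Π : H → K`, contractions `W₁, W₂` and an isometry `W` on `K` such that
`Π Tᵢ* = Wᵢ* Π`, `Π T* = W* Π`, `W` is a minimal isometric dilation of `T`,
`WᵢW = WWᵢ`, and `W₁ = W₂* W`. -/
theorem exists_special_dilation_tuple {H : Type u} [NormedAddCommGroup H]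
    [InnerProductSpace ℂ H] [CompleteSpace H] (T₁ T₂ : H →L[ℂ] H)
    (hT₁ : ‖T₁‖ ≤ 1) (hT₂ : ‖T₂‖ ≤ 1) (hcomm : T₁ * T₂ = T₂ * T₁) :
    ∃ (K : Type u) (_ : NormedAddCommGroup K) (_ : InnerProductSpace ℂ K) (_ : CompleteSpace K)
      (Pi : H →ₗᵢ[ℂ] K) (W₁ W₂ W : K →L[ℂ] K),
        ‖W₁‖ ≤ 1 ∧ ‖W₂‖ ≤ 1 ∧ adjoint W * W = 1 ∧
        (∀ h : H, Pi (adjoint T₁ h) = adjoint W₁ (Pi h)) ∧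
        (∀ h : H, Pi (adjoint T₂ h) = adjoint W₂ (Pi h)) ∧
        (∀ h : H, Pi (adjoint (T₁ * T₂) h) = adjoint W (Pi h)) ∧
        (Submodule.span ℂ
            {x : K | ∃ (n : ℕ) (h : H), x = (W ^ n) (Pi h)}).topologicalClosure = ⊤ ∧
        W₁ * W = W * W₁ ∧ W₂ * W = W * W₂ ∧
        W₁ = adjoint W₂ * W := by
  exact exists_special_dilation_tuple_general T₁ T₂ hT₁ hT₂ hcomm
end

section
/- Uniqueness theorem: Let T₁ and T₂ be commuting contractions on a complex Hilbert space H and T = T₁T₂. Suppose (K, Π, W₁, W₂, W) and (K′, Π′, W₁′, W₂′, W′) each consist of: a complex Hilbert space, a linear isometry from H into it, two contractions and an isometry on it, such that Π ∘ T_i* = W_i* ∘ Π for i = 1,2, Π ∘ T* = W* ∘ Π, K is the closed linear span of { Wⁿ(Πh) : n ∈ ℕ, h ∈ H }, W_iW = WW_i for i = 1,2, and W₁ = W₂*W (and the analogous conditions hold for the primed tuple). Then there exists a unitary τ : K → K′ such that τ ∘ Π = Π′, τ ∘ W₁ = W₁′ ∘ τ, τ ∘ W₂ = W₂′ ∘ τ,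 and τ ∘ W = W′ ∘ τ. -/
open ContinuousLinearMap

/-!
An isometry `W` with `W* e i = e (s i)` satisfies `⟪W ^ n e i, W ^ m e j⟫ = ⟪e (s^[m - n] i), e j⟫`
for `n ≤ m`, so minimality yields a unitary `τ` intertwining the two isometric dilations. Moreover a
vector `x` is determined by its inner products with `e` and by `W* x`. For `x = τ W₂ Π h` the former
are prescribed by `W₂* Π = Π T₂*`, the latter by `W* W₂ Π = W₁* Π = Π T₁*`, so `τ W₂ = W₂' τ` on the
range of `Π`, and on everything because `W₂` commutes with `W`.
-/

section CyclicFamily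

variable {ι R M N : Type*} [Semiring R]
  [AddCommMonoid M] [TopologicalSpace M] [ContinuousAdd M] [Module R M] [ContinuousConstSMul R M]
  [AddCommMonoid N] [TopologicalSpace N] [Module R N]

/-- The family `e` is cyclic for the operator `W`: the vectors `W ^ n (e i)` span a dense subspace.
For an isometric dilation embedded by `e`, this is minimality. -/
def IsCyclicFamily (W : M →L[R] M) (e : ι → M) : Prop :=
  (Submodule.span R {x : M | ∃ (n : ℕ) (i : ι), x = (W ^ n) (e i)}).topologicalClosure = ⊤

namespace IsCyclicFamily

variable {W : M →L[R] M} {e : ι → M}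

theorem denseRange_linearCombination (he : IsCyclicFamily W e) :
    DenseRange (Finsupp.linearCombination R fun p : ℕ × ι => (W ^ p.1) (e p.2)) := by
  have horbit : Set.range (fun p : ℕ × ι => (W ^ p.1) (e p.2)) =
      {x : M | ∃ (n : ℕ) (i : ι), x = (W ^ n) (e i)} := by
    ext x
    simp only [Set.mem_range, Prod.exists, Set.mem_ofPred_eq, eq_comm]
  rw [DenseRange, ← LinearMap.coe_range, Finsupp.range_linearCombination, horbit]
  exact Submodule.dense_iff_topologicalClosure_eq_top.2 he

theorem clm_ext [T2Space N] (he : IsCyclicFamily W e) {A B : M →L[R] N}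
    (h : ∀ n i, A ((W ^ n) (e i)) = B ((W ^ n) (e i))) : A = B := by
  refine ContinuousLinearMap.ext_on (Submodule.dense_iff_topologicalClosure_eq_top.2 he) ?_
  rintro _ ⟨n, i, rfl⟩
  exact h n i

theorem clm_ext_of_semiconj [T2Space N] (he : IsCyclicFamily W e) {W' : N →L[R] N}
    {A B : M →L[R] N} (hA : Function.Semiconj A W W') (hB : Function.Semiconj B W W')
    (h : ∀ i, A (e i) = B (e i)) : A = B :=
  he.clm_ext fun n i => by
    rw [FunLike.coe_pow_eq_iterate, hA.iterate_right n, hB.iterate_right n, h]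

end IsCyclicFamily

end CyclicFamily

section InnerProductSpace

variable {𝕜 ι H K K' : Type*} [RCLike 𝕜]
  [NormedAddCommGroup H] [InnerProductSpace 𝕜 H]
  [NormedAddCommGroup K] [InnerProductSpace 𝕜 K]
  [NormedAddCommGroup K'] [InnerProductSpace 𝕜 K']

theorem norm_linearCombination_eq_of_inner_eq {v : ι → K} {v' : ι → K'}
    (hgram : ∀ i j, inner 𝕜 (v i) (v j) = inner 𝕜 (v' i) (v' j)) (c : ι →₀ 𝕜) :
    ‖Finsupp.linearCombination 𝕜 v c‖ = ‖Finsupp.linearCombination 𝕜 v' c‖ := by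
  simp only [@norm_eq_sqrt_re_inner 𝕜, Finsupp.linearCombination_apply, Finsupp.sum, sum_inner,
    inner_sum, inner_smul_left, inner_smul_right, hgram]

variable [CompleteSpace K] [CompleteSpace K']

theorem exists_linearIsometryEquiv_of_inner_eq {v : ι → K} {v' : ι → K'}
    (hv : DenseRange (Finsupp.linearCombination 𝕜 v))
    (hv' : DenseRange (Finsupp.linearCombination 𝕜 v'))
    (hgram : ∀ i j, inner 𝕜 (v i) (v j) = inner 𝕜 (v' i) (v' j)) :
    ∃ τ : K ≃ₗᵢ[𝕜] K', ∀ i, τ (v i) = v' i := by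
  have hnorm (c : ι →₀ 𝕜) := (norm_linearCombination_eq_of_inner_eq hgram c).symm
  refine ⟨(LinearEquiv.refl 𝕜 (ι →₀ 𝕜)).extendOfIsometry _ _ hv hv' hnorm, fun i => ?_⟩
  simpa using (LinearEquiv.refl 𝕜 (ι →₀ 𝕜)).extendOfIsometry_eq _ _ hv hv' hnorm
    (Finsupp.single i 1)

theorem semiconj_adjoint_of_semiconj {τ : K ≃ₗᵢ[𝕜] K'} {A : K →L[𝕜] K} {A' : K' →L[𝕜] K'}
    (h : Function.Semiconj τ A A') : Function.Semiconj τ (adjoint A) (adjoint A') := by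
  intro x
  refine ext_inner_right 𝕜 (τ.surjective.forall.2 fun y => ?_)
  rw [τ.inner_map_map, adjoint_inner_left, adjoint_inner_left, ← h.eq, τ.inner_map_map]

-- Truncated subtraction covers both cases: at most one of the two iterates is nontrivial.
theorem inner_pow_pow_eq_inner_iterate {W : K →L[𝕜] K} (hW : adjoint W * W = 1) {e : ι → K}
    {s : ι → ι} (hs : ∀ i, e (s i) = adjoint W (e i)) (n m : ℕ) (i j : ι) :
    inner 𝕜 ((W ^ n) (e i)) ((W ^ m) (e j)) =
      inner 𝕜 (e (s^[m - n] i)) (e (s^[n - m] j)) := by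
  have hisom := W.inner_map_map_iff_adjoint_comp_self.2 hW
  induction n generalizing m i j with
  | zero =>
    induction m generalizing i with
    | zero => rfl
    | succ m ih =>
      rw [pow_succ', mul_apply_eq_comp, ← adjoint_inner_left]
      simpa [hs] using ih (s i)
  | succ n ih =>
    cases m with
    | zero =>
      rw [pow_succ', mul_apply_eq_comp, ← adjoint_inner_right]
      simpa [hs] using ih 0 i (s j)
    | succ m =>
      rw [pow_succ', pow_succ', mul_apply_eq_comp, mul_apply_eq_comp, hisom, ih,
        Nat.succ_sub_succ, Nat.succ_sub_succ]

theorem exists_linearIsometryEquiv_semiconj {W : K →L[𝕜] K} {W' : K' →L[𝕜] K'}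
    (hW : adjoint W * W = 1) (hW' : adjoint W' * W' = 1) {e : ι → K} {e' : ι → K'}
    (he : IsCyclicFamily W e) (he' : IsCyclicFamily W' e') {s : ι → ι}
    (hs : ∀ i, e (s i) = adjoint W (e i)) (hs' : ∀ i, e' (s i) = adjoint W' (e' i))
    (hgram : ∀ i j, inner 𝕜 (e i) (e j) = inner 𝕜 (e' i) (e' j)) :
    ∃ τ : K ≃ₗᵢ[𝕜] K', (∀ i, τ (e i) = e' i) ∧ Function.Semiconj τ W W' := by
  obtain ⟨τ, hτ⟩ := exists_linearIsometryEquiv_of_inner_eq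
    he.denseRange_linearCombination he'.denseRange_linearCombination fun p q => by
      rw [inner_pow_pow_eq_inner_iterate hW hs, inner_pow_pow_eq_inner_iterate hW' hs', hgram]
  have hτ_pow (n : ℕ) (i : ι) : τ ((W ^ n) (e i)) = (W' ^ n) (e' i) := hτ (n, i)
  have hcomp : (τ : K →L[𝕜] K') ∘L W = W' ∘L (τ : K →L[𝕜] K') := he.clm_ext fun n i => by
    calc
      τ (W ((W ^ n) (e i))) = τ ((W ^ (n + 1)) (e i)) := by rw [pow_succ', mul_apply_eq_comp]
      _ = (W' ^ (n + 1)) (e' i) := hτ_pow (n + 1) i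
      _ = W' (τ ((W ^ n) (e i))) := by rw [hτ_pow, pow_succ', mul_apply_eq_comp]
  exact ⟨τ, hτ_pow 0, fun x => DFunLike.congr_fun hcomp x⟩

theorem IsCyclicFamily.eq_of_inner_eq_of_adjoint_apply_eq {W : K →L[𝕜] K} {e : ι → K}
    (he : IsCyclicFamily W e) {x y : K} (hinner : ∀ i, inner 𝕜 x (e i) = inner 𝕜 y (e i))
    (hadj : adjoint W x = adjoint W y) : x = y := by
  refine innerSL_inj.1 (he.clm_ext fun n i => ?_)
  cases n with
  | zero => exact hinner i
  | succ n =>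
    simp only [innerSL_apply_apply, pow_succ', mul_apply_eq_comp, ← adjoint_inner_left, hadj]

/-- The tuple `(K, Pi, W₁, W₂, W)` dilates operators `T₁, T₂, T` on `H`, with `W` a minimal
isometric dilation of `T`. Only the adjoints `S₁, S₂, S` of `T₁, T₂, T` occur; they are plain
functions because their linearity is forced by the injectivity of `Pi`. -/
structure IsDilationTuple (S₁ S₂ S : H → H) (Pi : H →ₗᵢ[𝕜] K) (W₁ W₂ W : K →L[𝕜] K) : Prop where
  isometry : adjoint W * W = 1
  map_fst : ∀ h, Pi (S₁ h) = adjoint W₁ (Pi h)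
  map_snd : ∀ h, Pi (S₂ h) = adjoint W₂ (Pi h)
  map_prod : ∀ h, Pi (S h) = adjoint W (Pi h)
  minimal : IsCyclicFamily W Pi
  snd_comm : W₂ * W = W * W₂
  fst_eq : W₁ = adjoint W₂ * W

namespace IsDilationTuple

variable {S₁ S₂ S : H → H} {Pi : H →ₗᵢ[𝕜] K} {W₁ W₂ W : K →L[𝕜] K}
  {Pi' : H →ₗᵢ[𝕜] K'} {W₁' W₂' W' : K' →L[𝕜] K'}

theorem adjoint_apply_snd_apply (hD : IsDilationTuple S₁ S₂ S Pi W₁ W₂ W) (h : H) :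
    adjoint W (W₂ (Pi h)) = Pi (S₁ h) := by
  have hadj : adjoint W₁ = adjoint W * W₂ := by
    rw [hD.fst_eq, ← star_eq_adjoint, star_mul, star_eq_adjoint, star_eq_adjoint, adjoint_adjoint]
  rw [hD.map_fst, hadj, mul_apply_eq_comp]

theorem inner_snd_apply (hD : IsDilationTuple S₁ S₂ S Pi W₁ W₂ W) (h k : H) :
    inner 𝕜 (W₂ (Pi h)) (Pi k) = inner 𝕜 h (S₂ k) := by
  rw [← adjoint_inner_right, ← hD.map_snd, Pi.inner_map_map]

theorem map_snd_apply (hD : IsDilationTuple S₁ S₂ S Pi W₁ W₂ W)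
    (hD' : IsDilationTuple S₁ S₂ S Pi' W₁' W₂' W') {τ : K ≃ₗᵢ[𝕜] K'}
    (hτ : ∀ h, τ (Pi h) = Pi' h) (hτW : Function.Semiconj τ W W') (h : H) :
    τ (W₂ (Pi h)) = W₂' (Pi' h) := by
  refine hD'.minimal.eq_of_inner_eq_of_adjoint_apply_eq (fun k => ?_) ?_
  · rw [← hτ k, τ.inner_map_map, hD.inner_snd_apply, hτ, hD'.inner_snd_apply]
  · rw [← (semiconj_adjoint_of_semiconj hτW).eq, hD.adjoint_apply_snd_apply, hτ,
      hD'.adjoint_apply_snd_apply]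

theorem semiconj_snd (hD : IsDilationTuple S₁ S₂ S Pi W₁ W₂ W)
    (hD' : IsDilationTuple S₁ S₂ S Pi' W₁' W₂' W') {τ : K ≃ₗᵢ[𝕜] K'}
    (hτ : ∀ h, τ (Pi h) = Pi' h) (hτW : Function.Semiconj τ W W') :
    Function.Semiconj τ W₂ W₂' := by
  have hW₂ : Function.Semiconj W₂ W W := fun x => DFunLike.congr_fun hD.snd_comm x
  have hW₂' : Function.Semiconj W₂' W' W' := fun x => DFunLike.congr_fun hD'.snd_comm x
  have hcomp : (τ : K →L[𝕜] K') ∘L W₂ = W₂' ∘L (τ : K →L[𝕜] K') :=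
    hD.minimal.clm_ext_of_semiconj (hτW.comp_left hW₂) (hW₂'.comp_left hτW) fun h =>
      (hD.map_snd_apply hD' hτ hτW h).trans (congrArg W₂' (hτ h).symm)
  exact fun x => DFunLike.congr_fun hcomp x

end IsDilationTuple

theorem dilation_tuple_unique_general {S₁ S₂ S : H → H}
    {Pi : H →ₗᵢ[𝕜] K} {W₁ W₂ W : K →L[𝕜] K} {Pi' : H →ₗᵢ[𝕜] K'} {W₁' W₂' W' : K' →L[𝕜] K'}
    (hD : IsDilationTuple S₁ S₂ S Pi W₁ W₂ W) (hD' : IsDilationTuple S₁ S₂ S Pi' W₁' W₂' W') :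
    ∃ τ : K ≃ₗᵢ[𝕜] K',
      (∀ h : H, τ (Pi h) = Pi' h) ∧
      (∀ x : K, τ (W₁ x) = W₁' (τ x)) ∧
      (∀ x : K, τ (W₂ x) = W₂' (τ x)) ∧
      (∀ x : K, τ (W x) = W' (τ x)) := by
  obtain ⟨τ, hτ, hτW⟩ := exists_linearIsometryEquiv_semiconj hD.isometry hD'.isometry
    hD.minimal hD'.minimal hD.map_prod hD'.map_prod fun h k => by
      rw [Pi.inner_map_map, Pi'.inner_map_map]
  have hτW₂ := hD.semiconj_snd hD' hτ hτW
  have hτW₁ : Function.Semiconj τ W₁ W₁' := by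
    rw [hD.fst_eq, hD'.fst_eq]
    exact (semiconj_adjoint_of_semiconj hτW₂).comp_right hτW
  exact ⟨τ, hτ, hτW₁, hτW₂, hτW⟩

end InnerProductSpace

/-- **Uniqueness theorem.** Any two tuples `(K, Π, W₁, W₂, W)` and `(K', Π', W₁', W₂', W')`
dilating the commuting contractions `(T₁, T₂, T₁T₂)` such that `W` (resp. `W'`) is a minimal
isometric dilation of `T₁T₂`, `WᵢW = WWᵢ`, and `W₁ = W₂*W` (and likewise for the primed
tuple) are unitarily equivalent via a unitary `τ : K → K'` with `τΠ = Π'`, `τWᵢ = Wᵢ'τ`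
and `τW = W'τ`. -/
theorem dilation_tuple_unique {H : Type*} [NormedAddCommGroup H] [InnerProductSpace ℂ H]
    [CompleteSpace H]
    {K : Type*} [NormedAddCommGroup K] [InnerProductSpace ℂ K] [CompleteSpace K]
    {K' : Type*} [NormedAddCommGroup K'] [InnerProductSpace ℂ K'] [CompleteSpace K']
    (T₁ T₂ : H →L[ℂ] H) (hT₁ : ‖T₁‖ ≤ 1) (hT₂ : ‖T₂‖ ≤ 1) (hcomm : T₁ * T₂ = T₂ * T₁)
    (Pi : H →ₗᵢ[ℂ] K) (W₁ W₂ W : K →L[ℂ] K)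
    (Pi' : H →ₗᵢ[ℂ] K') (W₁' W₂' W' : K' →L[ℂ] K')
    (hW₁ : ‖W₁‖ ≤ 1) (hW₂ : ‖W₂‖ ≤ 1) (hW : adjoint W * W = 1)
    (hd₁ : ∀ h : H, Pi (adjoint T₁ h) = adjoint W₁ (Pi h))
    (hd₂ : ∀ h : H, Pi (adjoint T₂ h) = adjoint W₂ (Pi h))
    (hd : ∀ h : H, Pi (adjoint (T₁ * T₂) h) = adjoint W (Pi h))
    (hmin : (Submodule.span ℂ
      {x : K | ∃ (n : ℕ) (h : H), x = (W ^ n) (Pi h)}).topologicalClosure = ⊤)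
    (hc₁ : W₁ * W = W * W₁) (hc₂ : W₂ * W = W * W₂) (hprod : W₁ = adjoint W₂ * W)
    (hW₁' : ‖W₁'‖ ≤ 1) (hW₂' : ‖W₂'‖ ≤ 1) (hW' : adjoint W' * W' = 1)
    (hd₁' : ∀ h : H, Pi' (adjoint T₁ h) = adjoint W₁' (Pi' h))
    (hd₂' : ∀ h : H, Pi' (adjoint T₂ h) = adjoint W₂' (Pi' h))
    (hd' : ∀ h : H, Pi' (adjoint (T₁ * T₂) h) = adjoint W' (Pi' h))
    (hmin' : (Submodule.span ℂ
      {x : K' | ∃ (n : ℕ) (h : H), x = (W' ^ n) (Pi' h)}).topologicalClosure = ⊤)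
    (hc₁' : W₁' * W' = W' * W₁') (hc₂' : W₂' * W' = W' * W₂')
    (hprod' : W₁' = adjoint W₂' * W') :
    ∃ τ : K ≃ₗᵢ[ℂ] K',
      (∀ h : H, τ (Pi h) = Pi' h) ∧
      (∀ x : K, τ (W₁ x) = W₁' (τ x)) ∧
      (∀ x : K, τ (W₂ x) = W₂' (τ x)) ∧
      (∀ x : K, τ (W x) = W' (τ x)) := by
  exact dilation_tuple_unique_general ⟨hW, hd₁, hd₂, hd, hmin, hc₂, hprod⟩
    ⟨hW', hd₁', hd₂', hd', hmin', hc₂', hprod'⟩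
end

section
/- Tetrablock von Neumann inequality: Let T₁ and T₂ be commuting contractions on a complex Hilbert space H and T = T₁T₂. Let 𝔼 := { (X₀₀, X₁₁, det X) : X a 2×2 complex matrix with ‖X‖ < 1 }, where ‖X‖ is the operator norm of X acting on the Euclidean space ℂ². Then for every finitely supported family of coefficients c : ℕ×ℕ×ℕ → ℂ, ‖ Σ_{(i,j,k)} c(i,j,k) · T₁^i T₂^j T^k ‖ ≤ sup { | Σ_{(i,j,k)} c(i,j,k) · x₁^i x₂^j x₃^k | : (x₁, x₂, x₃) ∈ closure 𝔼 }. -/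
open ContinuousLinearMap

open Filter Topology
open scoped InnerProductSpace

/-! For commuting unitaries, a von Neumann inequality is a statement about characters of the closed
`*`-algebra they generate. A commuting pair `S₁, S₂` of contractions whose product `S` satisfies
`Sⁿ → 0` strongly is reduced to unitaries as follows. With `Dᵢ` the defect operator of `Sᵢ`, the
map `a h = (D₁ S₂ h, D₂ h)` satisfies `‖a h‖² = ‖h‖² - ‖S h‖²`, so by telescoping
`h ↦ (a (Sⁿ h))ₙ` is isometric. Since `(D₁ S₂ h, D₂ h)` and `(D₁ h, D₂ S₁ h)` have the same norm, a
unitary `v` of `G = H⁴` maps the one to the other, and `v` with the projection onto the first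
coordinate defines commuting unitaries `V₁, V₂` on `ℓ²(ℤ, G)`, with product the shift, that act on
sequences extending the orbits `(a (Sⁿ h))ₙ` as `S₁, S₂` act on `h` (Berger, Coburn and Lebow).
Scaling `Tᵢ` by `r < 1` and letting `r → 1` gives Andô's inequality over the bidisc. Finally, each
`(z, w, z w)` with `|z|, |w| ≤ 1` comes from the diagonal matrix `diag(z, w)`, hence lies in the
closure of the tetrablock. -/

section FreePolynomial

variable {ι A B : Type*} [Semiring A] [Algebra ℂ A] [Semiring B] [Algebra ℂ B]

theorem map_freeAlgebra_lift (φ : A →ₐ[ℂ] B) (u : ι → A) (p : FreeAlgebra ℂ ι) :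
    φ (FreeAlgebra.lift ℂ u p) = FreeAlgebra.lift ℂ (φ ∘ u) p :=
  DFunLike.congr_fun
    (FreeAlgebra.hom_ext (f := φ.comp (FreeAlgebra.lift ℂ u)) (by ext; simp)) p

theorem continuous_freeAlgebra_lift [TopologicalSpace A] [IsTopologicalSemiring A]
    (p : FreeAlgebra ℂ ι) : Continuous fun u : ι → A => FreeAlgebra.lift ℂ u p := by
  induction p using FreeAlgebra.induction with
  | grade0 r => simpa using continuous_const
  | grade1 i => simpa using continuous_apply i
  | mul p q hp hq =>
    simp only [map_mul]
    exact hp.mul hq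
  | add p q hp hq =>
    simp only [map_add]
    exact hp.add hq

end FreePolynomial

section Gelfand

variable {ι : Type*} {p : FreeAlgebra ℂ ι} {M : ℝ}

theorem norm_freeAlgebra_lift_le_of_commCStarAlgebra {A : Type*} [CommCStarAlgebra A] {u : ι → A}
    (hu : ∀ i, ‖u i‖ ≤ 1)
    (hM : ∀ z : ι → ℂ, (∀ i, ‖z i‖ ≤ 1) → ‖FreeAlgebra.lift ℂ z p‖ ≤ M) :
    ‖FreeAlgebra.lift ℂ u p‖ ≤ M := by
  have hM₀ : 0 ≤ M := (norm_nonneg _).trans (hM 0 (by simp))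
  have hnorm (x : A) : ‖WeakDual.gelfandTransform ℂ A x‖ = ‖x‖ :=
    (gelfandTransform_isometry A).norm_map_of_map_zero (map_zero _) x
  rw [← hnorm, ContinuousMap.norm_le _ hM₀]
  intro φ
  have hφ (x : A) : ‖φ x‖ ≤ ‖x‖ :=
    ((WeakDual.gelfandTransform ℂ A x).norm_coe_le_norm φ).trans_eq (hnorm x)
  have key := hM (WeakDual.CharacterSpace.toAlgHom φ ∘ u) fun i => (hφ (u i)).trans (hu i)
  rwa [← map_freeAlgebra_lift] at key

theorem norm_freeAlgebra_lift_le_of_isStarNormal {A : Type*} [CStarAlgebra A] {u : ι → A}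
    (hnormal : ∀ i, IsStarNormal (u i)) (hcomm : ∀ i j, Commute (u i) (u j))
    (hu : ∀ i, ‖u i‖ ≤ 1)
    (hM : ∀ z : ι → ℂ, (∀ i, ‖z i‖ ≤ 1) → ‖FreeAlgebra.lift ℂ z p‖ ≤ M) :
    ‖FreeAlgebra.lift ℂ u p‖ ≤ M := by
  let S₀ := StarAlgebra.adjoin ℂ (Set.range u)
  have hS₀ : IsMulCommutative S₀ := by
    refine StarAlgebra.isMulCommutative_adjoin ℂ ?_ ?_
    · rintro _ ⟨i, rfl⟩ _ ⟨j, rfl⟩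
      exact hcomm i j
    · rintro _ ⟨i, rfl⟩ _ ⟨j, rfl⟩
      exact (hnormal j).commute_star_right (hcomm i j)
  let S := S₀.topologicalClosure
  let _ : CStarAlgebra S :=
    StarSubalgebra.cstarAlgebra S (h_closed := S₀.isClosed_topologicalClosure)
  let _ : CommCStarAlgebra S :=
    { mul_comm := (StarSubalgebra.commRingTopologicalClosure S₀ hS₀.is_comm.comm).mul_comm }
  let w (i : ι) : S :=
    ⟨u i, S₀.le_topologicalClosure (StarAlgebra.subset_adjoin ℂ _ (Set.mem_range_self i))⟩
  have hw : (FreeAlgebra.lift ℂ w p : A) = FreeAlgebra.lift ℂ u p :=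
    map_freeAlgebra_lift S.subtype.toAlgHom w p
  rw [← hw]
  exact norm_freeAlgebra_lift_le_of_commCStarAlgebra (u := w) hu hM

theorem norm_freeAlgebra_lift_le_of_mem_unitary {A : Type*} [CStarAlgebra A] {u : ι → A}
    (hunitary : ∀ i, u i ∈ unitary A) (hcomm : ∀ i j, Commute (u i) (u j))
    (hM : ∀ z : ι → ℂ, (∀ i, ‖z i‖ ≤ 1) → ‖FreeAlgebra.lift ℂ z p‖ ≤ M) :
    ‖FreeAlgebra.lift ℂ u p‖ ≤ M := by
  refine norm_freeAlgebra_lift_le_of_isStarNormal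
    (fun i => isStarNormal_of_mem_unitary (hunitary i)) hcomm (fun i => ?_) hM
  rcases subsingleton_or_nontrivial A with _ | _
  · simp [Subsingleton.elim (u i) 0]
  · exact (CStarRing.norm_of_mem_unitary (hunitary i)).le

end Gelfand

section Intertwining

variable {ι E F : Type*} [NormedAddCommGroup E] [NormedSpace ℂ E] [NormedAddCommGroup F]
  [NormedSpace ℂ F] {Γ : Submodule ℂ (E × F)} {S : ι → E →L[ℂ] E} {V : ι → F →L[ℂ] F}

theorem prodMk_freeAlgebra_lift_mem (hΓ : ∀ i, ∀ z ∈ Γ, (S i z.1, V i z.2) ∈ Γ)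
    (p : FreeAlgebra ℂ ι) :
    ∀ z ∈ Γ, (FreeAlgebra.lift ℂ S p z.1, FreeAlgebra.lift ℂ V p z.2) ∈ Γ := by
  induction p using FreeAlgebra.induction with
  | grade0 r =>
    rintro ⟨h, x⟩ hz
    simpa [Algebra.algebraMap_eq_smul_one] using Γ.smul_mem r hz
  | grade1 i => simpa using hΓ i
  | mul p q hp hq => exact fun z hz => by simpa using hp _ (hq z hz)
  | add p q hp hq => exact fun z hz => by simpa using Γ.add_mem (hp z hz) (hq z hz)

theorem norm_freeAlgebra_lift_le_of_relation (hΓ : ∀ i, ∀ z ∈ Γ, (S i z.1, V i z.2) ∈ Γ)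
    (hle : ∀ z ∈ Γ, ‖z.1‖ ≤ ‖z.2‖) (hlift : ∀ h, ∃ x, (h, x) ∈ Γ ∧ ‖x‖ ≤ ‖h‖)
    (p : FreeAlgebra ℂ ι) : ‖FreeAlgebra.lift ℂ S p‖ ≤ ‖FreeAlgebra.lift ℂ V p‖ := by
  refine opNorm_le_bound _ (norm_nonneg _) fun h => ?_
  obtain ⟨x, hx, hxh⟩ := hlift h
  calc ‖FreeAlgebra.lift ℂ S p h‖
      ≤ ‖FreeAlgebra.lift ℂ V p x‖ := hle _ (prodMk_freeAlgebra_lift_mem hΓ p _ hx)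
    _ ≤ ‖FreeAlgebra.lift ℂ V p‖ * ‖x‖ := le_opNorm _ x
    _ ≤ ‖FreeAlgebra.lift ℂ V p‖ * ‖h‖ := by gcongr

end Intertwining

theorem compress_mul_compress {R : Type*} [Ring R] {P x : R} (hP : IsIdempotentElem P)
    (hPx : Commute P x) (y : R) :
    (P * x + (1 - P)) * (P * y + (1 - P)) = P * (x * y) + (1 - P) := by
  have hPxP : P * x * P = P * x := by rw [hPx.eq, mul_assoc, hP.eq]
  calc (P * x + (1 - P)) * (P * y + (1 - P))
      = P * x * P * y + (P * x - P * x * P) + (P - P * P) * y + (1 - P - (P - P * P)) := by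
        noncomm_ring
    _ = P * (x * y) + (1 - P) := by rw [hPxP, hP.eq, mul_assoc]; simp

theorem mul_add_one_sub_mem_unitary {R : Type*} [Ring R] [StarRing R] {P b : R}
    (hP : IsStarProjection P) (hb : b ∈ unitary R) (hPb : Commute P b) :
    P * b + (1 - P) ∈ unitary R := by
  have hPb' : Commute P (star b) := by simpa [hP.isSelfAdjoint.star_eq] using hPb.star_star
  have hstar : star (P * b + (1 - P)) = P * star b + (1 - P) := by
    simp [hP.isSelfAdjoint.star_eq, hPb'.eq]
  rw [Unitary.mem_iff, hstar, compress_mul_compress hP.isIdempotentElem hPb',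
    compress_mul_compress hP.isIdempotentElem hPb, Unitary.star_mul_self_of_mem hb,
    Unitary.mul_star_self_of_mem hb]
  simp

section BilateralSequences

theorem norm_sq_apply_le {E F : Type*} [SeminormedAddCommGroup E] [NormedSpace ℂ E]
    [SeminormedAddCommGroup F] [NormedSpace ℂ F] (A : E →L[ℂ] F) (x : E) :
    ‖A x‖ ^ 2 ≤ ‖A‖ ^ 2 * ‖x‖ ^ 2 := by
  rw [← mul_pow]
  gcongr
  exact A.le_opNorm x

/-- The Hilbert space `ℓ²(ℤ, G)`. -/
abbrev BilateralSeq (G : Type*) [NormedAddCommGroup G] : Type _ := lp (fun _ : ℤ => G) 2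

variable {G : Type*} [NormedAddCommGroup G]

theorem memℓp_two_iff_summable_norm_sq {f : ℤ → G} :
    Memℓp f 2 ↔ Summable fun n => ‖f n‖ ^ 2 := by
  simpa using memℓp_gen_iff (E := fun _ : ℤ => G) (p := 2) (f := f) (by norm_num)

theorem hasSum_norm_sq_s14 (x : BilateralSeq G) : HasSum (fun n => ‖x n‖ ^ 2) (‖x‖ ^ 2) := by
  simpa using lp.hasSum_norm (E := fun _ : ℤ => G) (p := 2) (by norm_num) x

theorem hasSum_norm_sq_add (x : BilateralSeq G) (k : ℤ) :
    HasSum (fun n => ‖x (n + k)‖ ^ 2) (‖x‖ ^ 2) :=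
  ((Equiv.addRight k).hasSum_iff (f := fun n => ‖x n‖ ^ 2)).2 (hasSum_norm_sq_s14 x)

variable [InnerProductSpace ℂ G]

/-- The ampliation `1 ⊗ A` of an operator `A` on `G` to `ℓ²(ℤ, G)`, acting entrywise. -/
noncomputable def ampliation (A : G →L[ℂ] G) : BilateralSeq G →L[ℂ] BilateralSeq G :=
  LinearMap.mkContinuous
    { toFun x := ⟨fun n => A (x n), memℓp_two_iff_summable_norm_sq.2 <|
        Summable.of_nonneg_of_le (fun _ => by positivity) (fun n => norm_sq_apply_le A (x n))
          ((hasSum_norm_sq_s14 x).summable.mul_left _)⟩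
      map_add' x y := by ext n; exact A.map_add _ _
      map_smul' c x := by ext n; simp } ‖A‖ fun x => by
    refine le_of_sq_le_sq ?_ (by positivity)
    rw [mul_pow]
    refine hasSum_le (fun n => ?_) (hasSum_norm_sq_s14 _) ((hasSum_norm_sq_s14 x).mul_left _)
    exact norm_sq_apply_le A (x n)

@[simp]
theorem ampliation_apply (A : G →L[ℂ] G) (x : BilateralSeq G) (n : ℤ) :
    ampliation A x n = A (x n) :=
  rfl

theorem ampliation_mul (A B : G →L[ℂ] G) : ampliation (A * B) = ampliation A * ampliation B :=
  rfl

@[simp]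
theorem ampliation_one : ampliation (1 : G →L[ℂ] G) = 1 :=
  rfl

/-- Translation `(x n)ₙ ↦ (x (n + k))ₙ` on `ℓ²(ℤ, G)`. -/
noncomputable def translation (k : ℤ) : BilateralSeq G →ₗᵢ[ℂ] BilateralSeq G where
  toFun x := ⟨fun n => x (n + k),
    memℓp_two_iff_summable_norm_sq.2 (hasSum_norm_sq_add x k).summable⟩
  map_add' _ _ := rfl
  map_smul' _ _ := rfl
  norm_map' x := (sq_eq_sq₀ (norm_nonneg _) (norm_nonneg _)).1 <|
    (hasSum_norm_sq_s14 _).unique (hasSum_norm_sq_add x k)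

@[simp]
theorem translation_apply (k : ℤ) (x : BilateralSeq G) (n : ℤ) : translation k x n = x (n + k) :=
  rfl

/-- The backward bilateral shift `(x n)ₙ ↦ (x (n + 1))ₙ` on `ℓ²(ℤ, G)`. -/
noncomputable def bilateralShift (G : Type*) [NormedAddCommGroup G] [InnerProductSpace ℂ G] :
    BilateralSeq G ≃ₗᵢ[ℂ] BilateralSeq G :=
  .ofSurjective (translation 1) fun x => ⟨translation (-1) x, by ext n; simp⟩

variable [CompleteSpace G]

theorem star_ampliation (A : G →L[ℂ] G) : star (ampliation A) = ampliation (star A) := by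
  refine ((eq_adjoint_iff _ _).2 fun x y => ?_).symm
  simp [lp.inner_eq_tsum, star_eq_adjoint, adjoint_inner_left]

theorem ampliation_mem_unitary {v : G →L[ℂ] G} (hv : v ∈ unitary (G →L[ℂ] G)) :
    ampliation v ∈ unitary (BilateralSeq G →L[ℂ] BilateralSeq G) := by
  simp [Unitary.mem_iff, star_ampliation, ← ampliation_mul, Unitary.star_mul_self_of_mem hv,
    Unitary.mul_star_self_of_mem hv]

theorem isStarProjection_ampliation {P : G →L[ℂ] G} (hP : IsStarProjection P) :
    IsStarProjection (ampliation P) where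
  isIdempotentElem := by
    rw [IsIdempotentElem, ← ampliation_mul, hP.isIdempotentElem.eq]
  isSelfAdjoint := by
    rw [isSelfAdjoint_iff, star_ampliation, hP.isSelfAdjoint.star_eq]

theorem linearIsometryEquiv_mem_unitary (e : G ≃ₗᵢ[ℂ] G) :
    (e : G →L[ℂ] G) ∈ unitary (G →L[ℂ] G) :=
  (Unitary.linearIsometryEquiv.symm e).2

end BilateralSequences

section BergerCoburnLebow

variable {G : Type*} [NormedAddCommGroup G] [InnerProductSpace ℂ G]

/-- The first Berger–Coburn–Lebow operator `(P B + (1 - P)) v` on `ℓ²(ℤ, G)`, with `B` the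
bilateral shift. -/
noncomputable def bclFst (P v : G →L[ℂ] G) : BilateralSeq G →L[ℂ] BilateralSeq G :=
  (ampliation P * (bilateralShift G : BilateralSeq G →L[ℂ] BilateralSeq G) +
    (1 - ampliation P)) * ampliation v

theorem bclFst_apply (P v : G →L[ℂ] G) (x : BilateralSeq G) (n : ℤ) :
    bclFst P v x n = P (v (x (n + 1))) + (v (x n) - P (v (x n))) :=
  rfl

theorem commute_bclFst_bilateralShift (P v : G →L[ℂ] G) :
    Commute (bclFst P v) (bilateralShift G : BilateralSeq G →L[ℂ] BilateralSeq G) :=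
  rfl

variable [CompleteSpace G] {P v : G →L[ℂ] G}

/-- The second Berger–Coburn–Lebow operator `V₂` on `ℓ²(ℤ, G)`, determined by requiring
`V₁ V₂` to be the bilateral shift when the first operator `V₁` is unitary. -/
noncomputable def bclSnd (P v : G →L[ℂ] G) : BilateralSeq G →L[ℂ] BilateralSeq G :=
  star (bclFst P v) * (bilateralShift G : BilateralSeq G →L[ℂ] BilateralSeq G)

theorem bclFst_mem_unitary (hP : IsStarProjection P) (hv : v ∈ unitary (G →L[ℂ] G)) :
    bclFst P v ∈ unitary (BilateralSeq G →L[ℂ] BilateralSeq G) :=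
  mul_mem (mul_add_one_sub_mem_unitary (isStarProjection_ampliation hP)
    (linearIsometryEquiv_mem_unitary (bilateralShift G)) rfl) (ampliation_mem_unitary hv)

theorem bclSnd_mem_unitary (hP : IsStarProjection P) (hv : v ∈ unitary (G →L[ℂ] G)) :
    bclSnd P v ∈ unitary (BilateralSeq G →L[ℂ] BilateralSeq G) :=
  mul_mem (Unitary.star_mem (bclFst_mem_unitary hP hv))
    (linearIsometryEquiv_mem_unitary (bilateralShift G))

theorem commute_bclFst_bclSnd (hP : IsStarProjection P) (hv : v ∈ unitary (G →L[ℂ] G)) :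
    Commute (bclFst P v) (bclSnd P v) := by
  have hV := bclFst_mem_unitary hP hv
  rw [Commute, SemiconjBy, bclSnd, ← mul_assoc, Unitary.mul_star_self_of_mem hV, mul_assoc,
    ← (commute_bclFst_bilateralShift P v).eq, ← mul_assoc, Unitary.star_mul_self_of_mem hV]

theorem bclSnd_apply (hP : IsSelfAdjoint P) (x : BilateralSeq G) (n : ℤ) :
    bclSnd P v x n = star v (P (x n) + (x (n + 1) - P (x (n + 1)))) := by
  let B : BilateralSeq G →L[ℂ] BilateralSeq G := bilateralShift G
  have hB : star B * B = 1 :=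
    Unitary.star_mul_self_of_mem (linearIsometryEquiv_mem_unitary (bilateralShift G))
  have hPB : ampliation P * B = B * ampliation P := rfl
  have key : bclSnd P v = ampliation (star v) * (ampliation P + (1 - ampliation P) * B) :=
    calc bclSnd P v
        = star (ampliation v) * (star B * star (ampliation P) + (1 - star (ampliation P))) * B := by
          simp [bclSnd, bclFst, B]
      _ = ampliation (star v) * (star B * (ampliation P * B) + (1 - ampliation P) * B) := by
          rw [star_ampliation, star_ampliation, hP.star_eq]
          noncomm_ring
      _ = ampliation (star v) * (ampliation P + (1 - ampliation P) * B) := by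
          rw [hPB, ← mul_assoc (star B), hB, one_mul]
  rw [key]
  rfl

end BergerCoburnLebow

section Orbit

variable {H G : Type*} [NormedAddCommGroup H] [InnerProductSpace ℂ H] [NormedAddCommGroup G]
  [InnerProductSpace ℂ G] {S : H →L[ℂ] H} {a : H →L[ℂ] G}

theorem hasSum_norm_sq_apply_pow (hS : ∀ h, Tendsto (fun n : ℕ => (S ^ n) h) atTop (𝓝 0))
    (ha : ∀ h, ‖a h‖ ^ 2 = ‖h‖ ^ 2 - ‖S h‖ ^ 2) (h : H) :
    HasSum (fun n : ℕ => ‖a ((S ^ n) h)‖ ^ 2) (‖h‖ ^ 2) := by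
  have hsum (N : ℕ) : ∑ n ∈ Finset.range N, ‖a ((S ^ n) h)‖ ^ 2 = ‖h‖ ^ 2 - ‖(S ^ N) h‖ ^ 2 := by
    induction N with
    | zero => simp
    | succ N ih =>
      rw [Finset.sum_range_succ, ih, ha, pow_succ' S, mul_apply_eq_comp]
      ring
  rw [hasSum_iff_tendsto_nat_of_nonneg (fun n => by positivity)]
  simp only [hsum]
  simpa using ((hS h).norm.pow 2).const_sub (‖h‖ ^ 2)

variable (S a) in
/-- The relation between `h : H` and the bilateral sequences that extend
`a h, a (S h), a (S² h), …` to negative indices. -/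
def orbitRelation : Submodule ℂ (H × BilateralSeq G) where
  carrier := {z | ∀ n : ℕ, z.2 n = a ((S ^ n) z.1)}
  add_mem' hz hw n := by simp [hz n, hw n]
  zero_mem' n := by simp
  smul_mem' c z hz n := by simp [hz n]

theorem norm_fst_le_of_mem_orbitRelation
    (hS : ∀ h, Tendsto (fun n : ℕ => (S ^ n) h) atTop (𝓝 0))
    (ha : ∀ h, ‖a h‖ ^ 2 = ‖h‖ ^ 2 - ‖S h‖ ^ 2) {z : H × BilateralSeq G}
    (hz : z ∈ orbitRelation S a) : ‖z.1‖ ≤ ‖z.2‖ := by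
  refine le_of_sq_le_sq ?_ (norm_nonneg _)
  refine hasSum_le_inj ((↑) : ℕ → ℤ) Nat.cast_injective (fun _ _ => by positivity) (fun n => ?_)
    (hasSum_norm_sq_apply_pow hS ha z.1) (hasSum_norm_sq_s14 z.2)
  rw [hz n]

theorem exists_mem_orbitRelation (hS : ∀ h, Tendsto (fun n : ℕ => (S ^ n) h) atTop (𝓝 0))
    (ha : ∀ h, ‖a h‖ ^ 2 = ‖h‖ ^ 2 - ‖S h‖ ^ 2) (h : H) :
    ∃ x : BilateralSeq G, (h, x) ∈ orbitRelation S a ∧ ‖x‖ = ‖h‖ := by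
  let f : ℤ → G := Function.extend ((↑) : ℕ → ℤ) (fun n => a ((S ^ n) h)) 0
  have hf (n : ℕ) : f n = a ((S ^ n) h) := Nat.cast_injective.extend_apply _ _ n
  have hsum : HasSum (fun n => ‖f n‖ ^ 2) (‖h‖ ^ 2) := by
    refine (Nat.cast_injective.hasSum_iff fun n hn => ?_).1
      (by simpa [Function.comp_def, hf] using hasSum_norm_sq_apply_pow hS ha h)
    simp [f, Function.extend_apply' _ _ n hn]
  let x : BilateralSeq G := ⟨f, memℓp_two_iff_summable_norm_sq.2 hsum.summable⟩
  exact ⟨x, hf, (sq_eq_sq₀ (norm_nonneg _) (norm_nonneg _)).1 ((hasSum_norm_sq_s14 x).unique hsum)⟩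

end Orbit

section Model

/-- Berger–Coburn–Lebow data for a pair of operators `S₁, S₂` on `H`: a defect operator `a` of
`S₁ S₂`, with values in `G`, together with a projection `P` and a unitary `v` on `G` for which
`a h, a (S₁ S₂ h), …` is transformed by the Berger–Coburn–Lebow operators as `h` is
by `S₁` and `S₂`. -/
structure BCLModel {H : Type*} [NormedAddCommGroup H] [InnerProductSpace ℂ H]
    (S₁ S₂ : H →L[ℂ] H) (G : Type*) [NormedAddCommGroup G] [InnerProductSpace ℂ G]
    [CompleteSpace G] where
  a : H →L[ℂ] G
  P : G →L[ℂ] G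
  v : G →L[ℂ] G
  norm_sq_a (h : H) : ‖a h‖ ^ 2 = ‖h‖ ^ 2 - ‖(S₁ * S₂) h‖ ^ 2
  isStarProjection_P : IsStarProjection P
  v_mem_unitary : v ∈ unitary (G →L[ℂ] G)
  a_fst (h : H) : a (S₁ h) = P (v (a ((S₁ * S₂) h))) + (v (a h) - P (v (a h)))
  v_a_snd (h : H) : v (a (S₂ h)) = P (a h) + (a ((S₁ * S₂) h) - P (a ((S₁ * S₂) h)))

namespace BCLModel

variable {H G : Type*} [NormedAddCommGroup H] [InnerProductSpace ℂ H] [NormedAddCommGroup G]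
  [InnerProductSpace ℂ G] [CompleteSpace G] {S₁ S₂ : H →L[ℂ] H}

theorem bclFst_mem_orbitRelation (m : BCLModel S₁ S₂ G) (hcomm : Commute S₁ S₂)
    {z : H × BilateralSeq G} (hz : z ∈ orbitRelation (S₁ * S₂) m.a) :
    (S₁ z.1, bclFst m.P m.v z.2) ∈ orbitRelation (S₁ * S₂) m.a := by
  intro n
  have hpow : ((S₁ * S₂) ^ n) (S₁ z.1) = S₁ (((S₁ * S₂) ^ n) z.1) :=
    DFunLike.congr_fun (((Commute.refl S₁).mul_right hcomm).pow_right n).eq.symm z.1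
  have hsucc : z.2 (n + 1) = m.a ((S₁ * S₂) (((S₁ * S₂) ^ n) z.1)) := by
    rw [← mul_apply_eq_comp, ← pow_succ']
    exact_mod_cast hz (n + 1)
  rw [bclFst_apply, hz n, hsucc, hpow, m.a_fst]

theorem bclSnd_mem_orbitRelation (m : BCLModel S₁ S₂ G) (hcomm : Commute S₁ S₂)
    {z : H × BilateralSeq G} (hz : z ∈ orbitRelation (S₁ * S₂) m.a) :
    (S₂ z.1, bclSnd m.P m.v z.2) ∈ orbitRelation (S₁ * S₂) m.a := by
  intro n
  have hpow : ((S₁ * S₂) ^ n) (S₂ z.1) = S₂ (((S₁ * S₂) ^ n) z.1) :=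
    DFunLike.congr_fun ((hcomm.symm.mul_right (Commute.refl S₂)).pow_right n).eq.symm z.1
  have hsucc : z.2 (n + 1) = m.a ((S₁ * S₂) (((S₁ * S₂) ^ n) z.1)) := by
    rw [← mul_apply_eq_comp, ← pow_succ']
    exact_mod_cast hz (n + 1)
  rw [bclSnd_apply m.isStarProjection_P.isSelfAdjoint, hz n, hsucc, hpow, ← m.v_a_snd,
    ← mul_apply_eq_comp, Unitary.star_mul_self_of_mem m.v_mem_unitary, one_apply_eq_self]

theorem norm_freeAlgebra_lift_le (m : BCLModel S₁ S₂ G) (hcomm : Commute S₁ S₂)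
    (hS : ∀ h, Tendsto (fun n : ℕ => ((S₁ * S₂) ^ n) h) atTop (𝓝 0))
    (p : FreeAlgebra ℂ (Fin 2)) :
    ‖FreeAlgebra.lift ℂ ![S₁, S₂] p‖ ≤
      ‖FreeAlgebra.lift ℂ ![bclFst m.P m.v, bclSnd m.P m.v] p‖ := by
  refine norm_freeAlgebra_lift_le_of_relation (Γ := orbitRelation (S₁ * S₂) m.a)
    (Fin.forall_fin_two.2 ⟨fun z => m.bclFst_mem_orbitRelation hcomm,
      fun z => m.bclSnd_mem_orbitRelation hcomm⟩)
    (fun z => norm_fst_le_of_mem_orbitRelation hS m.norm_sq_a) (fun h => ?_) p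
  obtain ⟨x, hx, hxh⟩ := exists_mem_orbitRelation hS m.norm_sq_a h
  exact ⟨x, hx, hxh.le⟩

end BCLModel

end Model

section Defect

variable {H : Type*} [NormedAddCommGroup H] [InnerProductSpace ℂ H] [CompleteSpace H]

theorem exists_norm_sq_eq_norm_sq_sub {S : H →L[ℂ] H} (hS : ‖S‖ ≤ 1) :
    ∃ D : H →L[ℂ] H, ∀ h, ‖D h‖ ^ 2 = ‖h‖ ^ 2 - ‖S h‖ ^ 2 := by
  have hpos : 0 ≤ 1 - star S * S := by
    rw [sub_nonneg, ← CStarAlgebra.norm_le_one_iff_of_nonneg _ (star_mul_self_nonneg S),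
      CStarRing.norm_star_mul_self]
    exact mul_le_one₀ hS (norm_nonneg S) hS
  obtain ⟨D, hD⟩ := CStarAlgebra.nonneg_iff_eq_star_mul_self.1 hpos
  refine ⟨D, fun h => ?_⟩
  calc ‖D h‖ ^ 2 = RCLike.re ⟪(star D * D) h, h⟫_ℂ := apply_norm_sq_eq_inner_adjoint_left D h
    _ = RCLike.re ⟪h, h⟫_ℂ - RCLike.re ⟪(star S * S) h, h⟫_ℂ := by
      rw [← hD, sub_apply, one_apply_eq_self, inner_sub_left, map_sub]
    _ = ‖h‖ ^ 2 - ‖S h‖ ^ 2 :=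
      congrArg₂ _ (inner_self_eq_norm_sq h) (apply_norm_sq_eq_inner_adjoint_left S h).symm

end Defect

section Reflection

variable {H G : Type*} [AddCommGroup H] [Module ℂ H] [NormedAddCommGroup G]
  [InnerProductSpace ℂ G] {a b c : H →ₗ[ℂ] G}

theorem inner_map_map_eq_of_norm_eq (hn : ∀ h, ‖a h‖ = ‖b h‖) (h k : H) :
    ⟪a h, a k⟫_ℂ = ⟪b h, b k⟫_ℂ := by
  simp only [inner_eq_sum_norm_sq_div_four, ← map_add, ← map_sub, ← map_smul, hn]

theorem exists_linearIsometryEquiv_of_inner_eq_zero [CompleteSpace G]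
    (hn : ∀ h, ‖a h‖ = ‖b h‖) (hab : ∀ h k, ⟪a h, b k⟫_ℂ = 0) :
    ∃ e : G ≃ₗᵢ[ℂ] G, ∀ h, e (a h) = b h := by
  have hba (h k : H) : ⟪b h, a k⟫_ℂ = 0 := inner_eq_zero_symm.1 (hab k h)
  let K := LinearMap.range (a - b)
  have hadd (h : H) : a h + b h ∈ Kᗮ := by
    rw [Submodule.mem_orthogonal]
    rintro _ ⟨k, rfl⟩
    simp [inner_sub_left, inner_add_right, inner_map_map_eq_of_norm_eq hn, hab, hba]
  have hsub (h : H) : a h - b h ∈ Kᗮᗮ := K.le_orthogonal_orthogonal ⟨h, rfl⟩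
  refine ⟨Kᗮ.reflection, fun h => ?_⟩
  calc Kᗮ.reflection (a h)
      = Kᗮ.reflection ((2⁻¹ : ℂ) • ((a h + b h) + (a h - b h))) := by congr 1; module
    _ = (2⁻¹ : ℂ) • ((a h + b h) + -(a h - b h)) := by
      rw [map_smul, map_add, Submodule.reflection_mem_subspace_eq_self (hadd h),
        Submodule.reflection_mem_subspace_orthogonalComplement_eq_neg (hsub h)]
    _ = b h := by module

theorem exists_linearIsometryEquiv_of_common_orthogonal [CompleteSpace G]
    (hac : ∀ h, ‖a h‖ = ‖c h‖) (hbc : ∀ h, ‖b h‖ = ‖c h‖)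
    (hac' : ∀ h k, ⟪a h, c k⟫_ℂ = 0) (hbc' : ∀ h k, ⟪b h, c k⟫_ℂ = 0) :
    ∃ e : G ≃ₗᵢ[ℂ] G, ∀ h, e (a h) = b h := by
  obtain ⟨e, he⟩ := exists_linearIsometryEquiv_of_inner_eq_zero hac hac'
  obtain ⟨f, hf⟩ := exists_linearIsometryEquiv_of_inner_eq_zero hbc hbc'
  exact ⟨e.trans f.symm, fun h => by simp [he, ← hf]⟩

end Reflection

section Existence

variable {E F : Type*} [NormedAddCommGroup E] [InnerProductSpace ℂ E] [NormedAddCommGroup F]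
  [InnerProductSpace ℂ F]

/-- The column operator `x ↦ (A i x)ᵢ` into a finite Hilbert sum of copies of `F`. -/
noncomputable def columnOp {ι : Type*} [Fintype ι] (A : ι → E →L[ℂ] F) :
    E →L[ℂ] PiLp 2 fun _ : ι => F :=
  ((PiLp.continuousLinearEquiv 2 ℂ fun _ : ι => F).symm : (ι → F) →L[ℂ] PiLp 2 fun _ : ι => F) ∘L
    .pi A

@[simp]
theorem columnOp_apply {ι : Type*} [Fintype ι] (A : ι → E →L[ℂ] F) (x : E) (i : ι) :
    columnOp A x i = A i x :=
  rfl

-- The last two coordinates give room for a common orthogonal image of both columns, so that no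
-- comparison of codimensions is needed.
theorem exists_linearIsometryEquiv_columnOp [CompleteSpace F] {A₁ A₂ B₁ B₂ : E →L[ℂ] F}
    (hn : ∀ x, ‖A₁ x‖ ^ 2 + ‖A₂ x‖ ^ 2 = ‖B₁ x‖ ^ 2 + ‖B₂ x‖ ^ 2) :
    ∃ e : PiLp 2 (fun _ : Fin 4 => F) ≃ₗᵢ[ℂ] PiLp 2 (fun _ : Fin 4 => F),
      ∀ x, e (columnOp ![A₁, A₂, 0, 0] x) = columnOp ![B₁, B₂, 0, 0] x := by
  refine exists_linearIsometryEquiv_of_common_orthogonal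
    (a := (columnOp ![A₁, A₂, 0, 0]).toLinearMap) (b := (columnOp ![B₁, B₂, 0, 0]).toLinearMap)
    (c := (columnOp ![0, 0, B₁, B₂]).toLinearMap) (fun x => ?_) (fun x => ?_) (fun x y => ?_)
    (fun x y => ?_)
  · simp [PiLp.norm_eq_of_L2, Fin.sum_univ_four, hn]
  · simp [PiLp.norm_eq_of_L2, Fin.sum_univ_four]
  · simp [PiLp.inner_apply, Fin.sum_univ_four]
  · simp [PiLp.inner_apply, Fin.sum_univ_four]

theorem isStarProjection_columnOp_proj_zero [CompleteSpace F] :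
    IsStarProjection (columnOp ![PiLp.proj 2 (𝕜 := ℂ) (fun _ : Fin 4 => F) 0, 0, 0, 0]) where
  isIdempotentElem := by
    ext x i
    fin_cases i <;> simp
  isSelfAdjoint := by
    refine ((eq_adjoint_iff _ _).2 fun x y => ?_).symm
    simp [PiLp.inner_apply, Fin.sum_univ_four]

theorem nonempty_bclModel {H : Type*} [NormedAddCommGroup H] [InnerProductSpace ℂ H]
    [CompleteSpace H] {S₁ S₂ : H →L[ℂ] H} (hS₁ : ‖S₁‖ ≤ 1) (hS₂ : ‖S₂‖ ≤ 1)
    (hcomm : Commute S₁ S₂) :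
    Nonempty (BCLModel S₁ S₂ (PiLp 2 fun _ : Fin 4 => H)) := by
  have hcomm' (h : H) : S₂ (S₁ h) = S₁ (S₂ h) := DFunLike.congr_fun hcomm.eq.symm h
  obtain ⟨D₁, hD₁⟩ := exists_norm_sq_eq_norm_sq_sub hS₁
  obtain ⟨D₂, hD₂⟩ := exists_norm_sq_eq_norm_sq_sub hS₂
  obtain ⟨v, hv⟩ := exists_linearIsometryEquiv_columnOp
    (A₁ := D₁ * S₂) (A₂ := D₂) (B₁ := D₁) (B₂ := D₂ * S₁) (by simp [hD₁, hD₂, hcomm'])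
  exact ⟨{
    a := columnOp ![D₁ * S₂, D₂, 0, 0]
    P := columnOp ![PiLp.proj 2 (𝕜 := ℂ) (fun _ : Fin 4 => H) 0, 0, 0, 0]
    v := v
    norm_sq_a h := by simp [PiLp.norm_sq_eq_of_L2, Fin.sum_univ_four, hD₁, hD₂]
    isStarProjection_P := isStarProjection_columnOp_proj_zero
    v_mem_unitary := linearIsometryEquiv_mem_unitary v
    a_fst h := by
      simp only [LinearIsometryEquiv.coe_coe'', hv]
      ext i
      fin_cases i <;> simp [hcomm']
    v_a_snd h := by
      simp only [LinearIsometryEquiv.coe_coe'', hv]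
      ext i
      fin_cases i <;> simp [hcomm'] }⟩

end Existence

section Ando

theorem norm_smul_lt_one {E : Type*} [SeminormedAddCommGroup E] [NormedSpace ℝ E] {x : E}
    (hx : ‖x‖ ≤ 1) {r : ℝ} (hr : r ∈ Set.Ioo 0 1) : ‖r • x‖ < 1 := by
  rw [norm_smul, Real.norm_of_nonneg hr.1.le]
  exact (mul_le_of_le_one_right hr.1.le hx).trans_lt hr.2

variable {H : Type*} [NormedAddCommGroup H] [InnerProductSpace ℂ H] [CompleteSpace H]
  {p : FreeAlgebra ℂ (Fin 2)} {M : ℝ}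

theorem ando_inequality_of_tendsto_zero {S₁ S₂ : H →L[ℂ] H} (hS₁ : ‖S₁‖ ≤ 1) (hS₂ : ‖S₂‖ ≤ 1)
    (hcomm : Commute S₁ S₂) (hS : ∀ h, Tendsto (fun n : ℕ => ((S₁ * S₂) ^ n) h) atTop (𝓝 0))
    (hM : ∀ z : Fin 2 → ℂ, (∀ i, ‖z i‖ ≤ 1) → ‖FreeAlgebra.lift ℂ z p‖ ≤ M) :
    ‖FreeAlgebra.lift ℂ ![S₁, S₂] p‖ ≤ M := by
  obtain ⟨m⟩ := nonempty_bclModel hS₁ hS₂ hcomm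
  have hV := commute_bclFst_bclSnd m.isStarProjection_P m.v_mem_unitary
  calc ‖FreeAlgebra.lift ℂ ![S₁, S₂] p‖
      ≤ ‖FreeAlgebra.lift ℂ ![bclFst m.P m.v, bclSnd m.P m.v] p‖ :=
        m.norm_freeAlgebra_lift_le hcomm hS p
    _ ≤ M := by
      refine norm_freeAlgebra_lift_le_of_mem_unitary ?_ ?_ hM
      · simp [Fin.forall_fin_two, bclFst_mem_unitary m.isStarProjection_P m.v_mem_unitary,
          bclSnd_mem_unitary m.isStarProjection_P m.v_mem_unitary]
      · simp [Fin.forall_fin_two, hV, hV.symm]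

theorem ando_inequality {T₁ T₂ : H →L[ℂ] H} (hT₁ : ‖T₁‖ ≤ 1) (hT₂ : ‖T₂‖ ≤ 1)
    (hcomm : Commute T₁ T₂)
    (hM : ∀ z : Fin 2 → ℂ, (∀ i, ‖z i‖ ≤ 1) → ‖FreeAlgebra.lift ℂ z p‖ ≤ M) :
    ‖FreeAlgebra.lift ℂ ![T₁, T₂] p‖ ≤ M := by
  let C := {r : ℝ | ‖FreeAlgebra.lift ℂ ![r • T₁, r • T₂] p‖ ≤ M}
  have hC : IsClosed C := by
    have hpair : Continuous fun r : ℝ => ![r • T₁, r • T₂] := by fun_prop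
    exact isClosed_le ((continuous_freeAlgebra_lift p).comp hpair).norm continuous_const
  have hIoo : Set.Ioo 0 1 ⊆ C := by
    intro r hr
    have hn₁ := norm_smul_lt_one hT₁ hr
    have hn₂ := norm_smul_lt_one hT₂ hr
    have hn : ‖(r • T₁) * (r • T₂)‖ < 1 :=
      (norm_mul_le _ _).trans_lt (mul_lt_one_of_nonneg_of_lt_one_left (norm_nonneg _) hn₁ hn₂.le)
    refine ando_inequality_of_tendsto_zero hn₁.le hn₂.le
      ((hcomm.smul_left r).smul_right r) (fun h => ?_) hM
    have hlim := ((ContinuousLinearMap.apply ℂ H h).continuous.tendsto 0).comp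
      (tendsto_pow_atTop_nhds_zero_of_norm_lt_one hn)
    rw [map_zero] at hlim
    exact hlim
  have h1 : (1 : ℝ) ∈ C := by
    refine hC.closure_subset_iff.2 hIoo ?_
    rw [closure_Ioo zero_ne_one]
    exact Set.right_mem_Icc.2 zero_le_one
  simpa [C] using h1

end Ando

section Tetrablock

/-- The tetrablock `𝔼 ⊆ ℂ³`. -/
def tetrablock : Set (ℂ × ℂ × ℂ) :=
  {x | ∃ X : Matrix (Fin 2) (Fin 2) ℂ,
    ‖Matrix.toEuclideanCLM (𝕜 := ℂ) X‖ < 1 ∧ x = (X 0 0, X 1 1, X.det)}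

/-- The map `X ↦ (X₀₀, X₁₁, det X)`, which carries the open unit ball of the `2 × 2` matrices onto
the tetrablock. -/
def tetrablockMap (X : Matrix (Fin 2) (Fin 2) ℂ) : ℂ × ℂ × ℂ :=
  (X 0 0, X 1 1, X.det)

open scoped Matrix.Norms.L2Operator

theorem continuous_tetrablockMap : Continuous tetrablockMap := by
  unfold tetrablockMap
  fun_prop

theorem tetrablock_eq_image_ball : tetrablock = tetrablockMap '' Metric.ball 0 1 := by
  ext x
  simp [tetrablock, tetrablockMap, Matrix.cstar_norm_def, eq_comm]

theorem isCompact_closure_tetrablock : IsCompact (closure tetrablock) := by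
  have : ProperSpace (Matrix (Fin 2) (Fin 2) ℂ) := FiniteDimensional.proper ℂ _
  refine ((isCompact_closedBall 0 1).image continuous_tetrablockMap).closure_of_subset ?_
  rw [tetrablock_eq_image_ball]
  exact Set.image_mono Metric.ball_subset_closedBall

theorem prodMk_mul_mem_closure_tetrablock {z w : ℂ} (hz : ‖z‖ ≤ 1) (hw : ‖w‖ ≤ 1) :
    (z, w, z * w) ∈ closure tetrablock := by
  rw [tetrablock_eq_image_ball]
  refine image_closure_subset_closure_image continuous_tetrablockMap
    ⟨Matrix.diagonal ![z, w], ?_, ?_⟩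
  · rw [closure_ball _ one_ne_zero, mem_closedBall_zero_iff, Matrix.l2_opNorm_diagonal,
      pi_norm_le_iff_of_nonneg zero_le_one]
    simp [Fin.forall_fin_two, hz, hw]
  · simp [tetrablockMap, Matrix.det_diagonal]

end Tetrablock

/-- **Tetrablock von Neumann inequality.** Let `T₁, T₂` be commuting contractions,
`T = T₁T₂`, and let `𝔼 = {(X₀₀, X₁₁, det X) : X a 2×2 complex matrix, ‖X‖ < 1}` be the
tetrablock.  For any polynomial `f(x₁,x₂,x₃) = Σ c(i,j,k) x₁ⁱ x₂ʲ x₃ᵏ` with finitely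
supported coefficients, `‖f(T₁,T₂,T)‖ ≤ sup { |f(x)| : x ∈ closure 𝔼 }`. -/
theorem tetrablock_von_neumann {H : Type*} [NormedAddCommGroup H] [InnerProductSpace ℂ H]
    [CompleteSpace H] (T₁ T₂ : H →L[ℂ] H)
    (hT₁ : ‖T₁‖ ≤ 1) (hT₂ : ‖T₂‖ ≤ 1) (hcomm : T₁ * T₂ = T₂ * T₁)
    (c : (ℕ × ℕ × ℕ) →₀ ℂ) :
    ‖∑ p ∈ c.support, c p • (T₁ ^ p.1 * T₂ ^ p.2.1 * (T₁ * T₂) ^ p.2.2)‖ ≤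
      sSup ((fun x : ℂ × ℂ × ℂ =>
          ‖∑ p ∈ c.support, c p * (x.1 ^ p.1 * x.2.1 ^ p.2.1 * x.2.2 ^ p.2.2)‖) ''
        closure {x : ℂ × ℂ × ℂ | ∃ X : Matrix (Fin 2) (Fin 2) ℂ,
          ‖Matrix.toEuclideanCLM (𝕜 := ℂ) X‖ < 1 ∧ x = (X 0 0, X 1 1, X.det)}) := by
  let q : FreeAlgebra ℂ (Fin 2) := ∑ p ∈ c.support,
    c p • (FreeAlgebra.ι ℂ 0 ^ p.1 * FreeAlgebra.ι ℂ 1 ^ p.2.1 *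
      (FreeAlgebra.ι ℂ 0 * FreeAlgebra.ι ℂ 1) ^ p.2.2)
  let f : ℂ × ℂ × ℂ → ℝ := fun x =>
    ‖∑ p ∈ c.support, c p * (x.1 ^ p.1 * x.2.1 ^ p.2.1 * x.2.2 ^ p.2.2)‖
  have hbdd : BddAbove (f '' closure tetrablock) :=
    isCompact_closure_tetrablock.bddAbove_image (by fun_prop)
  have hM (z : Fin 2 → ℂ) (hz : ∀ i, ‖z i‖ ≤ 1) :
      ‖FreeAlgebra.lift ℂ z q‖ ≤ sSup (f '' closure tetrablock) :=
    calc ‖FreeAlgebra.lift ℂ z q‖ = f (z 0, z 1, z 0 * z 1) := by simp [q, f]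
      _ ≤ sSup (f '' closure tetrablock) :=
        le_csSup hbdd ⟨_, prodMk_mul_mem_closure_tetrablock (hz 0) (hz 1), rfl⟩
  calc ‖∑ p ∈ c.support, c p • (T₁ ^ p.1 * T₂ ^ p.2.1 * (T₁ * T₂) ^ p.2.2)‖
      = ‖FreeAlgebra.lift ℂ ![T₁, T₂] q‖ := by simp [q]
    _ ≤ sSup (f '' closure tetrablock) := ando_inequality hT₁ hT₂ hcomm hM
end
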